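/- Let r ≥ 3 and q = p^h > 4 with p prime, h ≥ 1, and let V be a quasi-Hermitian variety of PG(r,q^2) whose characteristic vector v^V belongs to C_p. If π is a plane of PG(r,q^2) containing exactly q^3 + 1 points of V, then π ∩ V is a classical unital of π. -/

import Mathlib

/-!
Common framework: `ProjPoint F n` is the set of points of the projective space
PG(n-1, |F|) (so PG(r, q²) corresponds to `n = r + 1` and `Fintype.card F = q ^ 2`).
Projective subspaces of projective dimension `k` are the submodules of `Fin n → F`
of `finrank` equal to `k + 1`; lines have finrank 2, planes finrank 3 and
hyperplanes finrank `n - 1 = r`.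
-/

open Module Matrix

/-- The points of the projective space PG(n-1, |F|): one-dimensional subspaces
of `F^n`. -/
def ProjPoint (F : Type) [Field F] (n : ℕ) : Type :=
  {W : Submodule F (Fin n → F) // finrank F W = 1}

/-- The set of projective points lying in a given subspace `W`. -/
def pointsIn (F : Type) [Field F] (n : ℕ) (W : Submodule F (Fin n → F)) :
    Set (ProjPoint F n) :=
  {P | P.1 ≤ W}

/-- The number of points of `V` lying in the subspace `W`. -/
noncomputable def secant (F : Type) [Field F] (n : ℕ) (V : Set (ProjPoint F n))
    (W : Submodule F (Fin n → F)) : ℕ :=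
  (V ∩ pointsIn F n W).ncard

/-- The characteristic vector of a set of projective points, with values in `F_p`. -/
noncomputable def charVec (F : Type) [Field F] (p n : ℕ) (S : Set (ProjPoint F n)) :
    ProjPoint F n → ZMod p :=
  Set.indicator S 1

/-- `C_p`: the `F_p`-code spanned by the characteristic vectors of hyperplanes. -/
def hypCode (F : Type) [Field F] (p n : ℕ) :
    Submodule (ZMod p) (ProjPoint F n → ZMod p) :=
  Submodule.span (ZMod p)
    {v | ∃ H : Submodule F (Fin n → F), finrank F H = n - 1 ∧
      v = charVec F p n (pointsIn F n H)}

/-- A quasi-Hermitian variety of PG(r, q²): it has the size of a non-singular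
Hermitian variety and the same two intersection numbers with hyperplanes.
(All identities are stated multiplied through by `q² - 1`.) -/
def IsQuasiHermitian (F : Type) [Field F] (q r : ℕ)
    (V : Set (ProjPoint F (r + 1))) : Prop :=
  (V.ncard : ℤ) * ((q : ℤ) ^ 2 - 1)
      = ((q : ℤ) ^ (r + 1) + (-1) ^ r) * ((q : ℤ) ^ r - (-1) ^ r) ∧
  ∀ H : Submodule F (Fin (r + 1) → F), finrank F H = r →
    ((secant F (r + 1) V H : ℤ) * ((q : ℤ) ^ 2 - 1)
        = ((q : ℤ) ^ r + (-1) ^ (r - 1)) * ((q : ℤ) ^ (r - 1) - (-1) ^ (r - 1)) ∨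
     (secant F (r + 1) V H : ℤ) * ((q : ℤ) ^ 2 - 1)
        = ((q : ℤ) ^ 2 - 1)
          + (q : ℤ) ^ 2 * (((q : ℤ) ^ (r - 1) + (-1) ^ r) * ((q : ℤ) ^ (r - 2) - (-1) ^ r)))

/-- The zero set, in PG(n-1,|F|), of the Hermitian form `x ↦ xᵀ A x^(q)`. -/
def hermSet (F : Type) [Field F] (q n : ℕ) (A : Matrix (Fin n) (Fin n) F) :
    Set (ProjPoint F n) :=
  {P | ∀ x ∈ P.1, ∑ i, ∑ j, x i * A i j * (x j) ^ q = 0}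

/-- A non-singular Hermitian variety of PG(n-1, q²). -/
def IsNonsingHermitian (F : Type) [Field F] (q n : ℕ)
    (V : Set (ProjPoint F n)) : Prop :=
  ∃ A : Matrix (Fin n) (Fin n) F, IsUnit A.det ∧
    Aᵀ = A.map (fun a => a ^ q) ∧ V = hermSet F q n A

/-- A singular Hermitian variety of PG(n-1, q²) whose singular space (the radical
of the Hermitian form) has projective dimension `d`. -/
def IsSingularHermitian (F : Type) [Field F] (q n d : ℕ)
    (S : Set (ProjPoint F n)) : Prop :=
  ∃ A : Matrix (Fin n) (Fin n) F,
    Aᵀ = A.map (fun a => a ^ q) ∧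
    finrank F (LinearMap.ker (Matrix.toLin' Aᵀ)) = d + 1 ∧
    S = hermSet F q n A

/-- A `d`-singular quasi-Hermitian variety of PG(r, q²). -/
def IsSingularQuasiHermitian (F : Type) [Field F] (q r d : ℕ)
    (S : Set (ProjPoint F (r + 1))) : Prop :=
  ∃ S₀ : Set (ProjPoint F (r + 1)), IsSingularHermitian F q (r + 1) d S₀ ∧
    S.ncard = S₀.ncard ∧
    ∀ H : Submodule F (Fin (r + 1) → F), finrank F H = r →
      ∃ H₀ : Submodule F (Fin (r + 1) → F), finrank F H₀ = r ∧
        secant F (r + 1) S H = secant F (r + 1) S₀ H₀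

/-- `U` is a classical unital (Hermitian curve) of the plane `π` of PG(n-1, q²):
in some coordinatization `e` of `π`, it is the zero set of a non-degenerate
Hermitian form on `F³`. -/
def IsClassicalUnital (F : Type) [Field F] (q n : ℕ)
    (π : Submodule F (Fin n → F)) (U : Set (ProjPoint F n)) : Prop :=
  ∃ e : (Fin 3 → F) →ₗ[F] (Fin n → F), LinearMap.ker e = ⊥ ∧ LinearMap.range e = π ∧
    ∃ A : Matrix (Fin 3) (Fin 3) F, IsUnit A.det ∧ Aᵀ = A.map (fun a => a ^ q) ∧
      U = {P | ∃ y : Fin 3 → F, y ≠ 0 ∧ P.1 = Submodule.span F {e y} ∧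
        ∑ i, ∑ j, y i * A i j * (y j) ^ q = 0}

/-
That `v^V` lies in `C_p` means that, for a vector `u`, the power sums `∑ z, z ^ j * c (w + z • u)`
of the indicator `c` of `V` along the line through `w` in direction `u` are forms of degree `j`
in `w` for all `j < q ^ 2 - 1`.

The Hankel determinants built from these power sums detect how many points of a line lie in `V`;
counting their zeros gives the Szőnyi–Weiner inequalities on the sizes of the lines through a point
of a plane. Applied to `V` and to its symmetric difference with a line, they show that, if a line
`ℓ` through `u ∉ V` misses `V` in at most `q` points, then in each plane through `ℓ` the sum of
`(|V ∩ m| - 1) ^ 2` over the other lines `m` through `u` is at least `q ^ 4 - q ^ 3 + q`; the two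
hyperplane numbers determine the sum over all lines through `u`, and it is too small for that. So
no such `ℓ` exists, and in a plane with `q ^ 3 + 1` points the inequalities bound every line section
by `q + 1`. The double count of `∑ (|V ∩ m| - 1) * (|V ∩ m| - (q + 1)) = 0` leaves only sections of
size `1` and `q + 1`.

For a point `u` off this unital, the first power sum is a linear form whose kernel is the polar line
of `u`, and the power sums of degree `2, …, q` vanish on the polar line because they vanish on its
`q + 1` tangent directions. Hence, for `w` on the polar line, the section of the line `uw` is
`{z | z ^ (q + 1) = a w}` with `a w ∈ F_q`, where `a` is up to sign the power sum of degree `q + 1`.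
This makes `a` a Hermitian form on the polar line, and `z ^ (q + 1) - a w` is the Hermitian form of
the unital.
-/

open Polynomial
open scoped LinearAlgebra.Projectivization

section PolynomialMatrix

theorem natDegree_prod_le_of_forall_natDegree_le {R ι : Type*} [CommSemiring R] {s : Finset ι}
    {f : ι → R[X]} {d : ι → ℕ} (h : ∀ i ∈ s, (f i).natDegree ≤ d i) :
    (∏ i ∈ s, f i).natDegree ≤ ∑ i ∈ s, d i :=
  (natDegree_prod_le s f).trans (Finset.sum_le_sum h)

theorem coeff_prod_sum_of_forall_natDegree_le {R ι : Type*} [CommSemiring R] {s : Finset ι}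
    {f : ι → R[X]} {d : ι → ℕ} (h : ∀ i ∈ s, (f i).natDegree ≤ d i) :
    (∏ i ∈ s, f i).coeff (∑ i ∈ s, d i) = ∏ i ∈ s, (f i).coeff (d i) := by
  classical
  induction s using Finset.induction_on with
  | empty => simp
  | insert a s ha ih =>
    have hs : ∀ i ∈ s, (f i).natDegree ≤ d i := fun i hi => h i (Finset.mem_insert_of_mem hi)
    rw [Finset.prod_insert ha, Finset.sum_insert ha, Finset.prod_insert ha,
      coeff_mul_add_eq_of_natDegree_le (h a (Finset.mem_insert_self a s))
        (natDegree_prod_le_of_forall_natDegree_le hs), ih hs]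

variable {R n : Type*} [CommRing R] [Fintype n] [DecidableEq n]
  {M : Matrix n n R[X]} {d d' : n → ℕ}

theorem natDegree_det_le_of_forall_natDegree_le (h : ∀ i j, (M i j).natDegree ≤ d i + d' j) :
    M.det.natDegree ≤ ∑ i, d i + ∑ j, d' j := by
  rw [det_apply]
  refine natDegree_sum_le_of_forall_le _ _ fun σ _ => (natDegree_smul_le _ _).trans ?_
  rw [← Equiv.sum_comp σ d, ← Finset.sum_add_distrib]
  exact natDegree_prod_le_of_forall_natDegree_le fun i _ => h (σ i) i

theorem coeff_det_of_forall_natDegree_le (h : ∀ i j, (M i j).natDegree ≤ d i + d' j) :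
    M.det.coeff (∑ i, d i + ∑ j, d' j) = (of fun i j => (M i j).coeff (d i + d' j)).det := by
  rw [det_apply, det_apply, finsetSum_coeff]
  refine Finset.sum_congr rfl fun σ _ => ?_
  rw [Units.smul_def, Units.smul_def, coeff_smul, ← Equiv.sum_comp σ d, ← Finset.sum_add_distrib,
    coeff_prod_sum_of_forall_natDegree_le fun i _ => h (σ i) i]
  rfl

theorem pow_card_dvd_det_of_forall_dvd {a : R} {A : Matrix n n R} (J : Finset n)
    (h : ∀ i, ∀ j ∈ J, a ∣ A i j) : a ^ J.card ∣ A.det := by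
  have hcol : ∀ i j, ∃ b, A i j = (if j ∈ J then a else 1) * b := fun i j => by
    by_cases hj : j ∈ J
    · rw [if_pos hj]
      exact h i j hj
    · exact ⟨A i j, by rw [if_neg hj, one_mul]⟩
  choose B hB using hcol
  have hA : A = of fun i j => (if j ∈ J then a else 1) * of B i j := by ext i j; exact hB i j
  rw [hA, det_mul_row]
  exact Dvd.dvd.mul_right (by simp) _

end PolynomialMatrix

section RankDrop
variable {F n : Type*} [Field F] [Fintype n] [DecidableEq n]

theorem X_sub_C_pow_dvd_det (M : Matrix n n F[X]) (t : F) :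
    (X - C t) ^ (Fintype.card n - (M.map (eval t)).rank) ∣ M.det := by
  classical
  obtain ⟨L, L', D, hD⟩ := Pivot.exists_list_transvec_mul_mul_list_transvec_eq_diagonal
    (M.map (eval t))
  set A := (L.map TransvectionStruct.toMatrix).prod
  set B := (L'.map TransvectionStruct.toMatrix).prod
  have hA : A.det = 1 := TransvectionStruct.det_toMatrix_prod L
  have hB : B.det = 1 := TransvectionStruct.det_toMatrix_prod L'
  have hrank : Fintype.card n - (M.map (eval t)).rank = (Finset.univ.filter (D · = 0)).card := by
    rw [← rank_mul_eq_right_of_isUnit_det A _ (by simp [hA]),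
      ← rank_mul_eq_left_of_isUnit_det B _ (by simp [hB]), hD, rank_diagonal,
      Fintype.card_subtype_compl, Fintype.card_subtype]
    exact Nat.sub_sub_self (Finset.card_le_univ _)
  have hdet : (A.map C * M * B.map C).det = M.det := by
    simp only [det_mul, ← RingHom.mapMatrix_apply, ← RingHom.map_det, hA, hB, map_one, one_mul,
      mul_one]
  have heval : (A.map C * M * B.map C).map (eval t) = diagonal D := by
    have hC (N : Matrix n n F) : (N.map C).map (evalRingHom t) = N := by ext; simp
    rw [← hD, ← coe_evalRingHom, Matrix.map_mul, Matrix.map_mul, hC, hC]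
  rw [hrank, ← hdet]
  refine pow_card_dvd_det_of_forall_dvd _ fun i j hj => dvd_iff_isRoot.2 ?_
  have hij := congrFun (congrFun heval i) j
  rw [map_apply, diagonal_apply] at hij
  have hDj : D j = 0 := (Finset.mem_filter.1 hj).2
  rw [IsRoot.def, hij]
  split_ifs with h
  · rw [h, hDj]
  · rfl

end RankDrop

section Hankel
variable {F : Type*} [Field F] [Fintype F] (g : F → F) (k : ℕ)

/-- The `k × k` Hankel matrix of the moments `∑ z, z ^ j * g z` of a function on a finite field. -/
def momentHankel : Matrix (Fin k) (Fin k) F :=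
  of fun i j => ∑ z, z ^ ((i : ℕ) + j) * g z

theorem rank_momentHankel_le [DecidableEq F] :
    (momentHankel g k).rank ≤ (Finset.univ.filter (g · ≠ 0)).card := by
  let W : Matrix F (Fin k) F := of fun z i => z ^ (i : ℕ)
  have hfactor : momentHankel g k = Wᵀ * diagonal g * W := by
    ext i j
    rw [mul_apply, momentHankel, of_apply]
    refine Finset.sum_congr rfl fun z _ => ?_
    simp only [W, mul_diagonal, transpose_apply, of_apply]
    ring
  rw [hfactor, ← Fintype.card_subtype, ← rank_diagonal]
  exact (rank_mul_le_left _ _).trans (rank_mul_le_right _ _)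

theorem det_momentHankel_ne_zero [DecidableEq F] (hk : (Finset.univ.filter (g · ≠ 0)).card = k) :
    (momentHankel g k).det ≠ 0 := by
  set S := Finset.univ.filter (g · ≠ 0)
  let v : Fin k → F := Subtype.val ∘ (Finset.equivFinOfCardEq hk).symm
  have hv : (vandermonde v).det ≠ 0 :=
    det_vandermonde_ne_zero_iff.2 (Subtype.val_injective.comp (Equiv.injective _))
  have hfactor : momentHankel g k = (vandermonde v)ᵀ * diagonal (g ∘ v) * vandermonde v := by
    ext i j
    rw [mul_apply, momentHankel, of_apply, ← Finset.sum_filter_of_ne (p := (g · ≠ 0))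
      (fun z _ hz => right_ne_zero_of_mul hz), ← Finset.sum_coe_sort S,
      ← Equiv.sum_comp (Finset.equivFinOfCardEq hk).symm]
    refine Finset.sum_congr rfl fun l _ => ?_
    simp only [v, mul_diagonal, transpose_apply, vandermonde_apply, Function.comp_apply]
    ring
  rw [hfactor, det_mul, det_mul, det_transpose, det_diagonal]
  refine mul_ne_zero (mul_ne_zero hv (Finset.prod_ne_zero_iff.2 fun i _ => ?_)) hv
  exact (Finset.mem_filter.1 ((Finset.equivFinOfCardEq hk).symm i).2).2

theorem sum_sub_card_le_natDegree_det {n : Type*} [Fintype n] [DecidableEq n]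
    {M : Matrix n n F[X]} (hM : M.det ≠ 0) :
    ∑ t : F, (Fintype.card n - (M.map (eval t)).rank) ≤ M.det.natDegree := by
  classical
  calc ∑ t : F, (Fintype.card n - (M.map (eval t)).rank)
      ≤ ∑ t : F, M.det.roots.count t := Finset.sum_le_sum fun t _ => by
        rw [count_roots, le_rootMultiplicity_iff hM]
        exact X_sub_C_pow_dvd_det M t
    _ = M.det.roots.card := Multiset.sum_count_eq_card fun t _ => Finset.mem_univ t
    _ ≤ M.det.natDegree := card_roots' _

end Hankel

section HyperplaneCode
variable {F : Type*} [Field F] {E : Type*} [AddCommGroup E] [Module F E]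

open scoped Classical in
/-- The indicator function of the kernel of a functional, with values in the scalar field. -/
noncomputable def kerIndicator (φ : Dual F E) (x : E) : F := if φ x = 0 then 1 else 0

variable (F E) in
/-- The code over `F` of the hyperplanes of the projective space of `E`. A codeword is viewed as a
function on vectors, constant on the nonzero vectors of each point; the zero functional contributes
the all-one word, which is a combination of hyperplanes when `E` is finite of dimension at least
two. -/
def hyperplaneCode : Submodule F (E → F) := Submodule.span F (Set.range kerIndicator)

theorem kerIndicator_mem_hyperplaneCode (φ : Dual F E) : kerIndicator φ ∈ hyperplaneCode F E :=
  Submodule.subset_span ⟨φ, rfl⟩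

theorem kerIndicator_apply_of_eq_zero {φ : Dual F E} {x : E} (h : φ x = 0) :
    kerIndicator φ x = 1 := if_pos h

theorem kerIndicator_apply_of_ne_zero {φ : Dual F E} {x : E} (h : φ x ≠ 0) :
    kerIndicator φ x = 0 := if_neg h

theorem exists_eq_sum_kerIndicator {c : E → F} (hc : c ∈ hyperplaneCode F E) :
    ∃ (s : Finset (Dual F E)) (a : Dual F E → F), ∀ x, c x = ∑ φ ∈ s, a φ * kerIndicator φ x := by
  obtain ⟨l, rfl⟩ := Finsupp.mem_span_range_iff_exists_finsupp.1 hc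
  exact ⟨l.support, l, fun x => by simp [Finsupp.sum, Finset.sum_apply]⟩

theorem apply_smul_of_mem_hyperplaneCode {c : E → F} (hc : c ∈ hyperplaneCode F E) {a : F}
    (ha : a ≠ 0) (x : E) : c (a • x) = c x := by
  classical
  obtain ⟨s, b, hb⟩ := exists_eq_sum_kerIndicator hc
  simp [hb, kerIndicator, ha]

theorem comp_mem_hyperplaneCode {E' : Type*} [AddCommGroup E'] [Module F E'] {c : E → F}
    (hc : c ∈ hyperplaneCode F E) (L : E' →ₗ[F] E) : c ∘ L ∈ hyperplaneCode F E' := by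
  obtain ⟨s, a, ha⟩ := exists_eq_sum_kerIndicator hc
  have hcL : c ∘ L = ∑ φ ∈ s, a φ • kerIndicator (φ ∘ₗ L) := by
    ext x
    simp [ha, kerIndicator]
  rw [hcL]
  exact Submodule.sum_mem _ fun φ _ =>
    Submodule.smul_mem _ _ (kerIndicator_mem_hyperplaneCode _)

variable [Fintype F]

/-- The `j`-th power sum `∑ z, z ^ j * c (w + z • u)` of a word `c` along the line through `w` with
point at infinity `u`. -/
def powerSum (c : E → F) (u : E) (j : ℕ) (w : E) : F := ∑ z : F, z ^ j * c (w + z • u)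

theorem powerSum_kerIndicator_of_apply_eq_zero {φ : Dual F E} {u : E} (hu : φ u = 0) {j : ℕ}
    (hj : j < Fintype.card F - 1) (w : E) : powerSum (kerIndicator φ) u j w = 0 := by
  classical
  simp only [powerSum, kerIndicator, map_add, map_smul, hu, smul_zero, add_zero]
  rw [← Finset.sum_mul, FiniteField.sum_pow_lt_card_sub_one F j hj, zero_mul]

theorem powerSum_kerIndicator_of_apply_ne_zero {φ : Dual F E} {u : E} (hu : φ u ≠ 0) (j : ℕ)
    (w : E) : powerSum (kerIndicator φ) u j w = ((-(φ u)⁻¹ • φ) w) ^ j := by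
  classical
  have hzero (z : F) : φ (w + z • u) = 0 ↔ z = (-(φ u)⁻¹ • φ) w := by
    simp only [map_add, map_smul, smul_eq_mul, LinearMap.smul_apply]
    rw [neg_mul, ← mul_right_inj' hu (b := z), mul_neg, mul_inv_cancel_left₀ hu,
      eq_neg_iff_add_eq_zero, add_comm, mul_comm]
  simp only [powerSum, kerIndicator, hzero, mul_ite, mul_one, mul_zero, Finset.sum_ite_eq',
    Finset.mem_univ, if_true]

theorem exists_powerSum_eq_sum_pow {c : E → F} (hc : c ∈ hyperplaneCode F E) (u : E) :
    ∃ (s : Finset (Dual F E)) (a : Dual F E → F) (ψ : Dual F E → Dual F E),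
      ∀ j < Fintype.card F - 1, ∀ w, powerSum c u j w = ∑ φ ∈ s, a φ * ψ φ w ^ j := by
  classical
  obtain ⟨s, a, ha⟩ := exists_eq_sum_kerIndicator hc
  refine ⟨s.filter (· u ≠ 0), a, fun φ => -(φ u)⁻¹ • φ, fun j hj w => ?_⟩
  have hswap : powerSum c u j w = ∑ φ ∈ s, a φ * powerSum (kerIndicator φ) u j w := by
    simp only [powerSum, ha, Finset.mul_sum]
    rw [Finset.sum_comm]
    exact Finset.sum_congr rfl fun φ _ => Finset.sum_congr rfl fun z _ => mul_left_comm _ _ _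
  rw [hswap, Finset.sum_filter]
  refine Finset.sum_congr rfl fun φ _ => ?_
  split_ifs with hφ
  · rw [powerSum_kerIndicator_of_apply_ne_zero hφ]
  · rw [powerSum_kerIndicator_of_apply_eq_zero (not_not.1 hφ) hj, mul_zero]

theorem sum_add_smul_add_apply_of_mem_hyperplaneCode {c : E → F} (hc : c ∈ hyperplaneCode F E)
    (u w : E) : ∑ z : F, c (w + z • u) + c u = c 0 := by
  have hker (φ : Dual F E) :
      powerSum (kerIndicator φ) u 0 w + kerIndicator φ u = kerIndicator φ 0 := by
    rw [kerIndicator_apply_of_eq_zero φ.map_zero]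
    by_cases hu : φ u = 0
    · rw [powerSum_kerIndicator_of_apply_eq_zero hu (Nat.sub_pos_of_lt Fintype.one_lt_card),
        zero_add, kerIndicator_apply_of_eq_zero hu]
    · rw [powerSum_kerIndicator_of_apply_ne_zero hu, pow_zero,
        kerIndicator_apply_of_ne_zero hu, add_zero]
  obtain ⟨s, a, ha⟩ := exists_eq_sum_kerIndicator hc
  simp only [ha, ← hker, powerSum, pow_zero, one_mul, mul_add, Finset.sum_add_distrib,
    Finset.mul_sum]
  rw [Finset.sum_comm]

end HyperplaneCode

section LinePolynomial
variable {F : Type*} [Field F] {E : Type*} [AddCommGroup E] [Module F E] {ι : Type*}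
  (s : Finset ι) (a : ι → F) (ψ : ι → Dual F E) (v w : E) (j : ℕ)

/-- The restriction of the form `x ↦ ∑ i ∈ s, a i * ψ i x ^ j` to the affine line `v + t • w`, as a
polynomial in `t`. -/
noncomputable def linePolynomial : F[X] := ∑ i ∈ s, C (a i) * (C (ψ i v) + C (ψ i w) * X) ^ j

theorem eval_linePolynomial (t : F) :
    (linePolynomial s a ψ v w j).eval t = ∑ i ∈ s, a i * ψ i (v + t • w) ^ j := by
  simp [linePolynomial, eval_finsetSum, mul_comm t]

theorem natDegree_linePolynomial_le : (linePolynomial s a ψ v w j).natDegree ≤ j := by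
  refine natDegree_sum_le_of_forall_le _ _ fun i _ => ?_
  compute_degree

theorem coeff_linePolynomial : (linePolynomial s a ψ v w j).coeff j = ∑ i ∈ s, a i * ψ i w ^ j := by
  have hcoeff (i : ι) : ((C (ψ i v) + C (ψ i w) * X) ^ j).coeff j = ψ i w ^ j := by
    have hdeg : (C (ψ i v) + C (ψ i w) * X).natDegree ≤ 1 := by compute_degree
    simpa using coeff_pow_of_natDegree_le (m := j) hdeg
  simp only [linePolynomial, finsetSum_coeff, coeff_C_mul, hcoeff]

end LinePolynomial

section AffineCount
variable {F : Type*} [Field F] [Fintype F] {E : Type*} [AddCommGroup E] [Module F E]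

open scoped Classical in
/-- The support of `c` on the line joining `w` and `u`, the point `u` excluded, in the coordinate
`z ↦ w + z • u`. -/
noncomputable def affineSupport (c : E → F) (u w : E) : Finset F := {z | c (w + z • u) ≠ 0}

theorem mem_affineSupport {c : E → F} {u w : E} {z : F} :
    z ∈ affineSupport c u w ↔ c (w + z • u) ≠ 0 := by
  simp [affineSupport]

/-- The number of support points of `c` on the line joining `w` and `u`, the point `u` excluded. -/
noncomputable def affineCount (c : E → F) (u w : E) : ℕ := (affineSupport c u w).card

/-- The Szőnyi–Weiner inequality. The moments of `c` along the lines through `u` in a plane are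
polynomials in the slope `t`, hence so is the Hankel determinant of size `affineCount c u b`. It
vanishes to order `affineCount c u b - affineCount c u (a + t • b)` at `t`, but is not zero. -/
theorem sum_affineCount_sub_le {c : E → F} (hc : c ∈ hyperplaneCode F E) (u a b : E)
    (hb : 2 * affineCount c u b ≤ Fintype.card F) :
    ∑ t : F, (affineCount c u b - affineCount c u (a + t • b)) ≤
      affineCount c u b * (affineCount c u b - 1) := by
  classical
  set k := affineCount c u b with hk
  obtain ⟨s, x, ψ, hψ⟩ := exists_powerSum_eq_sum_pow hc u
  have hlt (i j : Fin k) : (i : ℕ) + j < Fintype.card F - 1 := by omega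
  let M : Matrix (Fin k) (Fin k) F[X] := of fun i j => linePolynomial s x ψ a b (i + j)
  have hdeg (i j : Fin k) : (M i j).natDegree ≤ (i : ℕ) + j := natDegree_linePolynomial_le ..
  have hdet : M.det ≠ 0 := by
    intro h0
    refine det_momentHankel_ne_zero (fun z => c (b + z • u)) k hk.symm ?_
    rw [← coeff_zero (∑ i : Fin k, (i : ℕ) + ∑ j : Fin k, (j : ℕ)), ← h0,
      coeff_det_of_forall_natDegree_le hdeg]
    congr 1
    ext i j
    exact (hψ _ (hlt i j) b).trans (coeff_linePolynomial ..).symm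
  have heval (t : F) : M.map (eval t) = momentHankel (fun z => c (a + t • b + z • u)) k := by
    ext i j
    exact (eval_linePolynomial ..).trans (hψ _ (hlt i j) _).symm
  calc ∑ t : F, (k - affineCount c u (a + t • b))
      ≤ ∑ t : F, (Fintype.card (Fin k) - (M.map (eval t)).rank) := by
        refine Finset.sum_le_sum fun t _ => ?_
        rw [heval, Fintype.card_fin]
        exact Nat.sub_le_sub_left (rank_momentHankel_le _ _) _
    _ ≤ ∑ i : Fin k, (i : ℕ) + ∑ j : Fin k, (j : ℕ) :=
        (sum_sub_card_le_natDegree_det hdet).trans (natDegree_det_le_of_forall_natDegree_le hdeg)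
    _ = k * (k - 1) := by
        rw [Fin.sum_univ_eq_sum_range (fun i => i) k, ← mul_two, Finset.sum_range_id_mul_two]

end AffineCount

section PointCount
variable {F : Type*} [Field F] {E : Type*} [AddCommGroup E] [Module F E]

/-- The number of points of the projective subspace `L` in the support of `c`. For a word of
`hyperplaneCode F E`, which is constant on the nonzero vectors of a point, the representative used
to evaluate `c` does not matter. -/
noncomputable def pointCount (c : E → F) (L : Submodule F E) : ℕ :=
  {P : ℙ F E | P.submodule ≤ L ∧ c P.rep ≠ 0}.ncard

variable {c : E → F}

theorem apply_rep_mk (hc : c ∈ hyperplaneCode F E) {x : E} (hx : x ≠ 0) :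
    c (Projectivization.mk F x hx).rep = c x := by
  obtain ⟨a, ha⟩ := Projectivization.exists_smul_eq_mk_rep F x hx
  rw [← ha]
  exact apply_smul_of_mem_hyperplaneCode hc a.ne_zero x

theorem pointCount_bot : pointCount c (⊥ : Submodule F E) = 0 := by
  have hempty : {P : ℙ F E | P.submodule ≤ ⊥ ∧ c P.rep ≠ 0} = ∅ :=
    Set.eq_empty_of_forall_notMem fun P ⟨hP, _⟩ => P.rep_nonzero <| by
      rwa [P.submodule_eq, Submodule.span_singleton_le_iff_mem, Submodule.mem_bot] at hP
  rw [pointCount, hempty, Set.ncard_empty]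

theorem ncard_support_eq_mul_pointCount [Finite F] (hc : c ∈ hyperplaneCode F E)
    (L : Submodule F E) :
    {x | x ∈ L ∧ x ≠ 0 ∧ c x ≠ 0}.ncard = (Nat.card F - 1) * pointCount c L := by
  have himage : {x | x ∈ L ∧ x ≠ 0 ∧ c x ≠ 0} = (fun y : Fˣ × ℙ F E => y.1 • y.2.rep) ''
      (Set.univ ×ˢ {P : ℙ F E | P.submodule ≤ L ∧ c P.rep ≠ 0}) := by
    ext x
    constructor
    · rintro ⟨hxL, hx, hcx⟩
      obtain ⟨a, ha⟩ := Projectivization.exists_smul_eq_mk_rep F x hx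
      refine ⟨(a⁻¹, .mk F x hx), ⟨trivial, ?_, by rwa [apply_rep_mk hc]⟩, ?_⟩
      · rwa [Projectivization.submodule_mk, Submodule.span_singleton_le_iff_mem]
      · exact inv_smul_eq_iff.2 ha.symm
    · rintro ⟨⟨a, P⟩, ⟨-, hPL, hcP⟩, rfl⟩
      rw [P.submodule_eq, Submodule.span_singleton_le_iff_mem] at hPL
      refine ⟨L.smul_mem a.1 hPL, smul_ne_zero a.ne_zero P.rep_nonzero, ?_⟩
      exact (apply_smul_of_mem_hyperplaneCode hc a.ne_zero P.rep).trans_ne hcP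
  have hinj : Function.Injective fun y : Fˣ × ℙ F E => y.1 • y.2.rep := by
    rintro ⟨a, P⟩ ⟨b, R⟩ h
    have hPR : P = R := by
      rw [← P.mk_rep, ← R.mk_rep, Projectivization.mk_eq_mk_iff]
      exact ⟨a⁻¹ * b, by rw [mul_smul, inv_smul_eq_iff]; exact h.symm⟩
    subst hPR
    exact Prod.ext (Units.ext (smul_left_injective F P.rep_nonzero h)) rfl
  rw [himage, hinj.injOn.ncard_image, Set.ncard_prod, Set.ncard_univ, Nat.card_units, pointCount]

theorem add_ne_zero_of_notMem {L : Submodule F E} {w x : E} (hw : w ∉ L) (hx : x ∈ L) :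
    w + x ≠ 0 := fun h =>
  hw (by rw [eq_neg_of_add_eq_zero_left h]; exact L.neg_mem hx)

theorem injective_mk_add_of_notMem {L : Submodule F E} {w : E} (hw : w ∉ L) :
    Function.Injective fun x : L =>
      Projectivization.mk F (w + x) (add_ne_zero_of_notMem hw x.2) := by
  intro x y h
  obtain ⟨a, ha⟩ := (Projectivization.mk_eq_mk_iff' F _ _ _ _).1 h
  have ha1 : a = 1 := by
    by_contra ha1
    refine hw ((L.smul_mem_iff (sub_ne_zero.2 ha1)).1 ?_)
    have hsub : (a - 1) • w = x - a • (y : E) := by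
      rw [sub_smul, one_smul, sub_eq_sub_iff_add_eq_add, ← smul_add, ha, add_comm]
    exact hsub ▸ L.sub_mem x.2 (L.smul_mem a y.2)
  rw [ha1, one_smul, add_right_inj] at ha
  exact Subtype.ext ha.symm

theorem mk_submodule_le_span_singleton_sup_iff {L : Submodule F E} {w : E} (hw : w ∉ L)
    (P : ℙ F E) : P.submodule ≤ Submodule.span F {w} ⊔ L ↔ P.submodule ≤ L ∨
      ∃ x : L, Projectivization.mk F (w + x) (add_ne_zero_of_notMem hw x.2) = P := by
  induction P using Projectivization.ind with | _ y hy => ?_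
  simp only [Projectivization.submodule_mk, Submodule.span_singleton_le_iff_mem,
    Projectivization.mk_eq_mk_iff']
  constructor
  · intro hyL
    obtain ⟨_, ha, x, hx, rfl⟩ := Submodule.mem_sup.1 hyL
    obtain ⟨a, rfl⟩ := Submodule.mem_span_singleton.1 ha
    by_cases ha0 : a = 0
    · exact Or.inl (by simpa [ha0] using hx)
    · exact Or.inr ⟨⟨a⁻¹ • x, L.smul_mem _ hx⟩, a⁻¹, by rw [smul_add, inv_smul_smul₀ ha0]⟩
  · rintro (hyL | ⟨x, a, ha⟩)
    · exact Submodule.mem_sup_right hyL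
    · have ha0 : a ≠ 0 := by
        rintro rfl
        exact add_ne_zero_of_notMem hw x.2 (by rw [← ha, zero_smul])
      refine (Submodule.smul_mem_iff _ ha0).1 (ha ▸ ?_)
      exact Submodule.add_mem_sup (Submodule.mem_span_singleton_self w) x.2

theorem pointCount_span_singleton_sup [Finite E] (hc : c ∈ hyperplaneCode F E) {L : Submodule F E}
    {w : E} (hw : w ∉ L) :
    pointCount c (Submodule.span F {w} ⊔ L) =
      pointCount c L + {x : L | c (w + x) ≠ 0}.ncard := by
  let f (x : L) : ℙ F E := .mk F (w + x) (add_ne_zero_of_notMem hw x.2)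
  have hunion : {P : ℙ F E | P.submodule ≤ Submodule.span F {w} ⊔ L ∧ c P.rep ≠ 0} =
      {P | P.submodule ≤ L ∧ c P.rep ≠ 0} ∪ f '' {x | c (w + x) ≠ 0} := by
    ext P
    simp only [Set.mem_ofPred_eq, mk_submodule_le_span_singleton_sup_iff hw, Set.mem_union,
      Set.mem_image, or_and_right, f]
    refine or_congr_right ⟨?_, ?_⟩
    · rintro ⟨⟨x, rfl⟩, hx⟩
      exact ⟨x, by rwa [apply_rep_mk hc] at hx, rfl⟩
    · rintro ⟨x, hx, rfl⟩
      exact ⟨⟨x, rfl⟩, by rwa [apply_rep_mk hc]⟩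
  have hdisj : Disjoint {P : ℙ F E | P.submodule ≤ L ∧ c P.rep ≠ 0} (f '' {x | c (w + x) ≠ 0}) := by
    rw [Set.disjoint_right]
    rintro _ ⟨x, -, rfl⟩ ⟨hx, -⟩
    rw [Projectivization.submodule_mk, Submodule.span_singleton_le_iff_mem] at hx
    exact hw ((L.add_mem_iff_left x.2).1 hx)
  rw [pointCount, hunion, Set.ncard_union_eq hdisj,
    (injective_mk_add_of_notMem hw).injOn.ncard_image, pointCount]

end PointCount

section LineCount
variable {F : Type*} [Field F] {E : Type*} [AddCommGroup E] [Module F E]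

theorem linearIndependent_pair_iff_notMem {u v : E} :
    LinearIndependent F ![u, v] ↔ u ≠ 0 ∧ v ∉ Submodule.span F {u} := by
  simpa [linearIndependent_unique_iff] using linearIndependent_finSnoc (K := F) (v := ![u]) (x := v)

theorem linearIndependent_triple_iff_notMem {u v w : E} :
    LinearIndependent F ![u, v, w] ↔
      LinearIndependent F ![u, v] ∧ w ∉ Submodule.span F {u, v} := by
  simpa [Set.pair_comm] using linearIndependent_finSnoc (K := F) (v := ![u, v]) (x := w)

theorem exists_dual_eq_zero_ne_zero {u v w : E}
    (huvw : LinearIndependent F ![u, v, w]) :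
    ∃ φ : Dual F E, φ u = 0 ∧ φ v = 0 ∧ φ w ≠ 0 := by
  obtain ⟨φ, hφ, hle⟩ := Submodule.exists_le_ker_of_notMem
    (linearIndependent_triple_iff_notMem.1 huvw).2
  exact ⟨φ, hle (Submodule.subset_span (by simp)), hle (Submodule.subset_span (by simp)), hφ⟩

variable {c : E → F} {u v w : E}

theorem pointCount_span_singleton_of_eq_zero [Finite E] (hc : c ∈ hyperplaneCode F E) (hu : u ≠ 0)
    (hcu : c u = 0) : pointCount c (Submodule.span F {u}) = 0 := by
  have h := pointCount_span_singleton_sup hc (mt (Submodule.mem_bot F).1 hu)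
  have hempty : {x : (⊥ : Submodule F E) | c (u + x) ≠ 0} = ∅ :=
    Set.eq_empty_of_forall_notMem fun x hx => hx (by rwa [(Submodule.mem_bot F).1 x.2, add_zero])
  rwa [sup_bot_eq, pointCount_bot, hempty, Set.ncard_empty] at h

theorem pointCount_span_singleton_of_ne_zero [Finite E] (hc : c ∈ hyperplaneCode F E) (hu : u ≠ 0)
    (hcu : c u ≠ 0) : pointCount c (Submodule.span F {u}) = 1 := by
  have h := pointCount_span_singleton_sup hc (mt (Submodule.mem_bot F).1 hu)
  have huniv : {x : (⊥ : Submodule F E) | c (u + x) ≠ 0} = Set.univ :=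
    Set.eq_univ_of_forall fun x => by simpa [(Submodule.mem_bot F).1 x.2] using hcu
  rwa [sup_bot_eq, pointCount_bot, huniv, Set.ncard_univ, Nat.card_unique] at h

theorem pointCount_span_singleton_congr [Finite E] {c' : E → F} (hc : c ∈ hyperplaneCode F E)
    (hc' : c' ∈ hyperplaneCode F E) (hu : u ≠ 0) (h : c u = c' u) :
    pointCount c (Submodule.span F {u}) = pointCount c' (Submodule.span F {u}) := by
  by_cases hcu : c u = 0
  · rw [pointCount_span_singleton_of_eq_zero hc hu hcu,
      pointCount_span_singleton_of_eq_zero hc' hu (h ▸ hcu)]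
  · rw [pointCount_span_singleton_of_ne_zero hc hu hcu,
      pointCount_span_singleton_of_ne_zero hc' hu (h ▸ hcu)]

variable [Fintype F] [Finite E]

theorem pointCount_span_pair (hc : c ∈ hyperplaneCode F E) (huv : LinearIndependent F ![u, v]) :
    pointCount c (Submodule.span F {u, v}) =
      pointCount c (Submodule.span F {u}) + affineCount c u v := by
  classical
  obtain ⟨hu, hv⟩ := linearIndependent_pair_iff_notMem.1 huv
  have himage : {x : Submodule.span F {u} | c (v + x) ≠ 0} =
      LinearEquiv.toSpanNonzeroSingleton F E u hu '' {z | c (v + z • u) ≠ 0} := by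
    rw [LinearEquiv.image_eq_preimage_symm]
    ext x
    obtain ⟨z, rfl⟩ := (LinearEquiv.toSpanNonzeroSingleton F E u hu).surjective x
    simp
  rw [Set.pair_comm, Submodule.span_insert, pointCount_span_singleton_sup hc hv, himage,
    (LinearEquiv.injective _).injOn.ncard_image, affineCount, Set.ncard_eq_toFinset_card']
  simp [affineSupport]

theorem pointCount_span_triple (hc : c ∈ hyperplaneCode F E)
    (huvw : LinearIndependent F ![u, v, w]) :
    pointCount c (Submodule.span F {u, v, w}) =
      pointCount c (Submodule.span F {u, v}) + ∑ t : F, affineCount c u (w + t • v) := by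
  classical
  obtain ⟨huv, hw⟩ := linearIndependent_triple_iff_notMem.1 huvw
  let f (y : F × F) : Submodule.span F {u, v} :=
    ⟨y.2 • u + y.1 • v, Submodule.mem_span_pair.2 ⟨y.2, y.1, rfl⟩⟩
  have hf : Function.Injective f := fun y y' h => by
    obtain ⟨h2, h1⟩ := huv.eq_of_pair (Subtype.ext_iff.1 h)
    exact Prod.ext h1 h2
  have himage : {x : Submodule.span F {u, v} | c (w + x) ≠ 0} =
      f '' {y | c (w + y.1 • v + y.2 • u) ≠ 0} := by
    ext ⟨x, hx⟩
    obtain ⟨z, t, rfl⟩ := Submodule.mem_span_pair.1 hx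
    have hfx : ⟨z • u + t • v, hx⟩ = f (t, z) := rfl
    rw [hfx, hf.mem_set_image, Set.mem_ofPred_eq, Set.mem_ofPred_eq, add_right_comm, add_assoc]
  have hset : ({u, v, w} : Set E) = insert w {u, v} := by
    rw [Set.insert_comm w u, Set.pair_comm w v]
  rw [hset, Submodule.span_insert, pointCount_span_singleton_sup hc hw, himage,
    hf.injOn.ncard_image, Set.ncard_eq_toFinset_card']
  simp [affineCount, affineSupport, Finset.card_filter, Fintype.sum_prod_type]

theorem affineCount_mul_add_le (hc : c ∈ hyperplaneCode F E)
    (huvw : LinearIndependent F ![u, v, w]) (hv : 2 * affineCount c u v ≤ Fintype.card F) :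
    affineCount c u v * (Fintype.card F + 2) + pointCount c (Submodule.span F {u}) ≤
      pointCount c (Submodule.span F {u, v, w}) + affineCount c u v ^ 2 := by
  have hplane := pointCount_span_triple hc huvw
  have hline := pointCount_span_pair hc (linearIndependent_triple_iff_notMem.1 huvw).1
  have hdeficit := sum_affineCount_sub_le hc u w v hv
  set k := affineCount c u v
  have hsum : Fintype.card F * k ≤
      ∑ t : F, (k - affineCount c u (w + t • v)) + ∑ t : F, affineCount c u (w + t • v) := by
    rw [← Finset.sum_add_distrib, ← smul_eq_mul, ← Finset.card_univ, ← Finset.sum_const]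
    exact Finset.sum_le_sum fun t _ => le_tsub_add
  rw [Nat.mul_sub_one] at hdeficit
  have hk : k ≤ k * k := Nat.le_mul_self k
  rw [pow_two]
  lia

end LineCount

section Complement
variable {F : Type*} [Field F] {E : Type*} [AddCommGroup E] [Module F E] [Fintype F]
  {c : E → F} {φ : Dual F E} {u v w : E}

theorem affineCount_sub_kerIndicator_of_ne_zero (c : E → F) (hu : φ u = 0) (hw : φ w ≠ 0) :
    affineCount (c - kerIndicator φ) u w = affineCount c u w := by
  classical
  simp [affineCount, affineSupport, kerIndicator, hu, hw]

theorem affineCount_sub_kerIndicator_add (hc01 : ∀ x, c x = 0 ∨ c x = 1) (hu : φ u = 0)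
    (hw : φ w = 0) :
    affineCount (c - kerIndicator φ) u w + affineCount c u w = Fintype.card F := by
  classical
  have hcompl (z : F) : (c - kerIndicator φ) (w + z • u) ≠ 0 ↔ ¬ c (w + z • u) ≠ 0 := by
    rcases hc01 (w + z • u) with h | h <;> simp [kerIndicator, hu, hw, h]
  simp only [affineCount, affineSupport, hcompl]
  rw [add_comm, Finset.card_filter_add_card_filter_not, Finset.card_univ]

theorem pointCount_sub_kerIndicator_add [Finite E] (hc : c ∈ hyperplaneCode F E)
    (hc01 : ∀ x, c x = 0 ∨ c x = 1) (huvw : LinearIndependent F ![u, v, w])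
    (hu : φ u = 0) (hv : φ v = 0) (hw : φ w ≠ 0) :
    pointCount (c - kerIndicator φ) (Submodule.span F {u, v, w}) +
        2 * pointCount c (Submodule.span F {u, v}) =
      pointCount c (Submodule.span F {u, v, w}) + (Fintype.card F + 1) := by
  have hc' : c - kerIndicator φ ∈ hyperplaneCode F E :=
    sub_mem hc (kerIndicator_mem_hyperplaneCode φ)
  have huv := (linearIndependent_triple_iff_notMem.1 huvw).1
  have hu0 := (linearIndependent_pair_iff_notMem.1 huv).1
  have hoff : ∑ t : F, affineCount (c - kerIndicator φ) u (w + t • v) =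
      ∑ t : F, affineCount c u (w + t • v) := Finset.sum_congr rfl fun t _ =>
    affineCount_sub_kerIndicator_of_ne_zero c hu (by simpa [hv] using hw)
  have hon := affineCount_sub_kerIndicator_add hc01 hu hv
  have hpoint : pointCount (c - kerIndicator φ) (Submodule.span F {u}) +
      pointCount c (Submodule.span F {u}) = 1 := by
    rcases hc01 u with h | h
    · rw [pointCount_span_singleton_of_eq_zero hc hu0 h,
        pointCount_span_singleton_of_ne_zero hc' hu0 (by simp [h, kerIndicator, hu])]
    · rw [pointCount_span_singleton_of_ne_zero hc hu0 (by simp [h]),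
        pointCount_span_singleton_of_eq_zero hc' hu0 (by simp [h, kerIndicator, hu])]
  rw [pointCount_span_triple hc' huvw, pointCount_span_triple hc huvw, hoff,
    pointCount_span_pair hc' huv, pointCount_span_pair hc huv]
  lia

/-- The Szőnyi–Weiner inequality for the symmetric difference of `c` with a hyperplane: `β` is the
number of points of the line that `c` misses. -/
theorem mul_add_le_of_pointCount_add_eq [Finite E] (hc : c ∈ hyperplaneCode F E)
    (hc01 : ∀ x, c x = 0 ∨ c x = 1) (huvw : LinearIndependent F ![u, v, w]) (hcu : c u = 1)
    {β : ℕ} (hβ : pointCount c (Submodule.span F {u, v}) + β = Fintype.card F + 1)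
    (hβF : 2 * β ≤ Fintype.card F) :
    β * (Fintype.card F + 2) + (Fintype.card F + 1) ≤
      pointCount c (Submodule.span F {u, v, w}) + 2 * β + β ^ 2 := by
  obtain ⟨φ, hu, hv, hw⟩ := exists_dual_eq_zero_ne_zero huvw
  have huv := (linearIndependent_triple_iff_notMem.1 huvw).1
  have hu0 := (linearIndependent_pair_iff_notMem.1 huv).1
  have hcount : affineCount (c - kerIndicator φ) u v = β := by
    have hon := affineCount_sub_kerIndicator_add hc01 hu hv
    rw [pointCount_span_pair hc huv,
      pointCount_span_singleton_of_ne_zero hc hu0 (by simp [hcu])] at hβ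
    lia
  have hplane := pointCount_sub_kerIndicator_add hc hc01 huvw hu hv hw
  have hle := affineCount_mul_add_le (sub_mem hc (kerIndicator_mem_hyperplaneCode φ)) huvw
    (by rwa [hcount])
  rw [hcount] at hle
  lia

end Complement

section LongLineArithmetic

theorem le_of_dvd_of_sub_lt {p q y : ℤ} (hpq : p ∣ q) (hy : p ∣ y) (h : q - p < y) : q ≤ y := by
  have hlt : q - y < p := by lia
  by_contra! hyq
  exact hlt.not_ge (Int.le_of_dvd (sub_pos.2 hyq) (dvd_sub hpq hy))

variable {ι : Type*} {q : ℤ}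

theorem two_mul_mul_sum_sub_card_mul_sq_le_sum_sq (s : Finset ι) (y : ι → ℤ) (a : ℤ) :
    2 * a * ∑ i ∈ s, y i - s.card * a ^ 2 ≤ ∑ i ∈ s, y i ^ 2 := by
  have hsq : 0 ≤ ∑ i ∈ s, (y i - a) ^ 2 := Finset.sum_nonneg fun i _ => sq_nonneg _
  have hexpand : ∑ i ∈ s, (y i - a) ^ 2 =
      ∑ i ∈ s, y i ^ 2 - 2 * a * ∑ i ∈ s, y i + s.card * a ^ 2 := by
    simp only [sub_sq, Finset.sum_add_distrib, Finset.sum_sub_distrib, Finset.sum_const,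
      nsmul_eq_mul, Finset.mul_sum]
    congr 2
    exact Finset.sum_congr rfl fun i _ => by ring
  lia

/- Multiples of `p` avoid the open interval from `q - p` to `q`, so `(y - (q - p)) * (y - q)` is
nonnegative. -/
theorem le_sum_sq_of_le_sum [Fintype ι] {p : ℤ} {y : ι → ℤ} (hp : 2 ≤ p) (hpq : p ∣ q)
    (hple : p ≤ q) (hq : 5 ≤ q) (hcard : (Fintype.card ι : ℤ) = q ^ 2) (hpy : ∀ i, p ∣ y i)
    (hsum : q ^ 3 - 3 * q ≤ ∑ i, y i) : q ^ 4 - q ^ 3 + q ≤ ∑ i, y i ^ 2 := by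
  have hnonneg : 0 ≤ ∑ i, (y i - (q - p)) * (y i - q) := by
    refine Finset.sum_nonneg fun i _ => ?_
    rcases le_or_gt (y i) (q - p) with hle | hlt
    · exact mul_nonneg_of_nonpos_of_nonpos (by lia) (by lia)
    · have hqy := le_of_dvd_of_sub_lt hpq (hpy i) hlt
      exact mul_nonneg (by lia) (by lia)
  have hexpand : ∑ i, (y i - (q - p)) * (y i - q) =
      ∑ i, y i ^ 2 - (2 * q - p) * ∑ i, y i + q ^ 2 * (q * (q - p)) := by
    have hconst : q ^ 2 * (q * (q - p)) = ∑ _i : ι, q * (q - p) := by simp [hcard]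
    rw [hconst, Finset.mul_sum, ← Finset.sum_sub_distrib, ← Finset.sum_add_distrib]
    exact Finset.sum_congr rfl fun i _ => by ring
  have hmul := mul_le_mul_of_nonneg_left hsum (show 0 ≤ 2 * q - p by lia)
  have hpq' : 0 ≤ (p - 2) * q := mul_nonneg (by lia) (by lia)
  have hcubic : 0 ≤ q * ((q - 1) * (q - 5)) :=
    mul_nonneg (by lia) (mul_nonneg (by lia) (by lia))
  lia

theorem le_sq_add_of_two_mul_mul_sub_le {β Y S : ℤ} (hq : 5 ≤ q) (hqβ : 6 ≤ q ∨ q ≤ β)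
    (hβq : 2 * β ≤ q ^ 2) (hY : β * (q ^ 2 + 1 - β) - 2 * q ^ 2 + 1 ≤ Y)
    (hS : ∀ a, 2 * a * Y - (q ^ 2 - 1) * a ^ 2 ≤ S) :
    q ^ 4 - q ^ 3 + q ≤ (q ^ 2 - β) ^ 2 + S := by
  rcases le_or_gt (2 * β) q with hsmall | hsmall
  · nlinarith [hS 0, mul_nonneg (sub_nonneg.2 hsmall) (show 0 ≤ 4 * q ^ 2 - 2 * β - q by nlinarith)]
  rcases le_or_gt (2 * q) β with hlarge | hlarge
  · have hY' : 2 * q ^ 3 - 6 * q ^ 2 + 2 * q + 1 ≤ Y := by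
      nlinarith [mul_nonneg (sub_nonneg.2 hlarge) (show 0 ≤ q ^ 2 + 1 - 2 * q - β by nlinarith)]
    nlinarith [hS q, sq_nonneg (q ^ 2 - β), mul_nonneg (sub_nonneg.2 hq) (sq_nonneg q),
      mul_nonneg (sub_nonneg.2 hq) (mul_nonneg (sub_nonneg.2 hq) (sq_nonneg q))]
  · have hf : 0 ≤ 2 * q ^ 2 * β + 4 * β - 3 * β ^ 2 - 12 * q ^ 2 + 8 + q ^ 3 - q := by
      rcases hqβ with hq6 | hqβ
      · nlinarith [mul_nonneg (show 0 ≤ 2 * β - q - 1 by lia) (show 0 ≤ 2 * q - β by lia),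
          mul_nonneg (show 0 ≤ 2 * β - q - 1 by lia) (show 0 ≤ 4 * q ^ 2 - 15 * q + 5 by nlinarith),
          mul_nonneg (sub_nonneg.2 hq6) (sq_nonneg q)]
      · nlinarith [mul_nonneg (sub_nonneg.2 hqβ) (show 0 ≤ 2 * q - β by lia),
          mul_nonneg (sub_nonneg.2 hqβ) (show 0 ≤ 2 * q ^ 2 - 9 * q + 4 by nlinarith),
          mul_nonneg (sub_nonneg.2 hq) (sq_nonneg q)]
    nlinarith [hS 2]

theorem le_sum_sq_of_sq_le_two_mul [Fintype ι] {y : ι → ℤ} {m : ι} (hq : 5 ≤ q)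
    (hcard : (Fintype.card ι : ℤ) = q ^ 2) (hqm : 6 ≤ q ∨ q ≤ q ^ 2 - y m)
    (hm : q ^ 2 ≤ 2 * y m) (hsum : (q ^ 2 - y m) * y m + 1 ≤ ∑ i, y i + q ^ 2) :
    q ^ 4 - q ^ 3 + q ≤ ∑ i, y i ^ 2 := by
  classical
  rw [← Finset.add_sum_erase _ y (Finset.mem_univ m)] at hsum
  rw [← Finset.add_sum_erase _ _ (Finset.mem_univ m)]
  have hcard' : ((Finset.univ.erase m).card : ℤ) = q ^ 2 - 1 := by
    rw [Finset.cast_card_erase_of_mem (Finset.mem_univ m), Finset.card_univ, hcard]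
  have hquad := two_mul_mul_sum_sub_card_mul_sq_le_sum_sq (Finset.univ.erase m) y
  simp only [hcard'] at hquad
  have hle := le_sq_add_of_two_mul_mul_sub_le hq hqm (by lia) (by lia) hquad
  rwa [sub_sub_cancel] at hle

/-- In a plane through a long line on a point `u`, `y i + 1` is the number of points of `V` on the
`i`-th other line through `u`. The hypotheses `hA` and `hB` are Szőnyi–Weiner inequalities for the
symmetric difference of `V` with the long line, taken at a point of the `i`-th line off `V` and on
`V` respectively, and `hC` is the one for the symmetric difference of `V` with the `i`-th line. -/
theorem le_sum_sq_of_forall_dvd [Fintype ι] [Nonempty ι] {p : ℤ} {y : ι → ℤ} (hp : 2 ≤ p)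
    (hpq : p ∣ q) (hq : 5 ≤ q) (h5 : q = 5 → p = 5) (hcard : (Fintype.card ι : ℤ) = q ^ 2)
    (hy0 : ∀ i, 0 ≤ y i) (hyq : ∀ i, y i < q ^ 2) (hpy : ∀ i, p ∣ y i)
    (hA : ∀ i, 2 * (y i + 2) ≤ q ^ 2 → (y i + 2) * (q ^ 2 - y i) ≤ ∑ j, y j + q ^ 2 + q)
    (hB : ∀ i, 2 * (y i + 1) ≤ q ^ 2 → (y i + 1) * (q ^ 2 + 1 - y i) < ∑ j, y j + q ^ 2 + q)
    (hC : ∀ i, q ^ 2 ≤ 2 * y i → (q ^ 2 - y i) * y i + 1 ≤ ∑ j, y j + q ^ 2) :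
    q ^ 4 - q ^ 3 + q ≤ ∑ i, y i ^ 2 := by
  have hple : p ≤ q := Int.le_of_dvd (by lia) hpq
  obtain ⟨m, hm⟩ := Finite.exists_max y
  have hsum_le : ∑ i, y i ≤ q ^ 2 * y m :=
    (Finset.sum_le_sum fun i _ => hm i).trans_eq (by simp [hcard])
  have hqm : q ≤ y m := by
    refine le_of_dvd_of_sub_lt hpq (hpy m) ?_
    by_contra! hle
    nlinarith [hA m (by nlinarith [hy0 m]), hy0 m]
  rcases le_or_gt (2 * (y m + 2)) (q ^ 2) with hshort | hshort
  · refine le_sum_sq_of_le_sum hp hpq hple hq hcard hpy ?_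
    nlinarith [hA m hshort,
      mul_nonneg (sub_nonneg.2 hqm) (show 0 ≤ q ^ 2 - q - y m - 2 by nlinarith)]
  rcases le_or_gt (2 * (y m + 1)) (q ^ 2) with hmiddle | hmiddle
  · refine le_sum_sq_of_le_sum hp hpq hple hq hcard hpy ?_
    have hend : 0 ≤ (2 * y m - (q ^ 2 - 3)) * (q ^ 2 - 2 - 2 * y m) :=
      mul_nonneg (by lia) (by lia)
    nlinarith [hB m hmiddle, mul_nonneg (show 0 ≤ q by lia)
      (show 0 ≤ q ^ 3 - 4 * q ^ 2 - q + 8 by nlinarith)]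
  have hlong : q ^ 2 ≤ 2 * y m := by
    by_contra! hlt
    have hodd : 2 * (q ^ 2 - y m) = q ^ 2 + 1 := by lia
    have hp2 : p ∣ q ^ 2 := dvd_pow hpq two_ne_zero
    have hp1 : p ∣ 1 :=
      (Int.dvd_add_right hp2).1 (hodd ▸ (dvd_sub hp2 (hpy m)).mul_left 2)
    linarith [Int.le_of_dvd one_pos hp1]
  have hqβ : 6 ≤ q ∨ q ≤ q ^ 2 - y m := by
    rcases hq.lt_or_eq with hlt | rfl
    · exact .inl (by lia)
    · have hdvd : 5 ∣ 5 ^ 2 - y m := dvd_sub (by norm_num) (h5 rfl ▸ hpy m)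
      exact .inr (Int.le_of_dvd (by linarith [hyq m]) hdvd)
  exact le_sum_sq_of_sq_le_two_mul hq hcard hqβ hlong (hC m hlong)

end LongLineArithmetic

section LineThroughPoint
variable {F : Type*} [Field F] {E : Type*} [AddCommGroup E] [Module F E]

theorem span_pair_add_smul (u w : E) (z : F) :
    Submodule.span F {w + z • u, u} = Submodule.span F {u, w} := by
  apply le_antisymm <;> rw [Submodule.span_le] <;> rintro x (rfl | rfl)
  · exact Submodule.mem_span_pair.2 ⟨z, 1, by module⟩
  · exact Submodule.subset_span (by simp)
  · exact Submodule.subset_span (by simp)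
  · exact Submodule.mem_span_pair.2 ⟨1, -z, by module⟩

theorem span_triple_add_smul (u v w : E) (t z : F) :
    Submodule.span F {w + t • v + z • u, u, v} = Submodule.span F {u, v, w} := by
  apply le_antisymm <;> rw [Submodule.span_le] <;> rintro x (rfl | rfl | rfl)
  · exact Submodule.mem_span_triple.2 ⟨z, t, 1, by module⟩
  · exact Submodule.subset_span (by simp)
  · exact Submodule.subset_span (by simp)
  · exact Submodule.subset_span (by simp)
  · exact Submodule.subset_span (by simp)
  · exact Submodule.mem_span_triple.2 ⟨1, -z, -t, by module⟩

theorem linearIndependent_triple_add_smul {u v w : E} (h : LinearIndependent F ![u, v, w])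
    (t z : F) : LinearIndependent F ![w + t • v + z • u, u, v] := by
  obtain ⟨huv, hw⟩ := linearIndependent_triple_iff_notMem.1 h
  have hmem : t • v + z • u ∈ Submodule.span F {u, v} :=
    Submodule.mem_span_pair.2 ⟨z, t, add_comm _ _⟩
  refine linearIndependent_finCons.2 ⟨huv, ?_⟩
  rwa [Matrix.range_cons_cons_empty, add_assoc, Submodule.add_mem_iff_left _ hmem]

theorem pointCount_span_singleton_add_affineCount [Fintype F] [Finite E] {c : E → F}
    (hc : c ∈ hyperplaneCode F E) {u w : E} (z : F) (h : LinearIndependent F ![w + z • u, u]) :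
    pointCount c (Submodule.span F {w + z • u}) + affineCount c (w + z • u) u =
      pointCount c (Submodule.span F {u}) + affineCount c u w := by
  have huw : LinearIndependent F ![u, w] := by
    rwa [LinearIndependent.pair_symm_iff, add_comm, LinearIndependent.pair_add_smul_right_iff] at h
  rw [← pointCount_span_pair hc h, span_pair_add_smul, pointCount_span_pair hc huw]

end LineThroughPoint

section ConeCodeword
variable {F : Type*} [Field F] {E : Type*} [AddCommGroup E] [Module F E]

/-- The codewords that are indicator functions of a set of projective points, viewed as a cone of
vectors. A set in the code meets every line in `1` modulo `p` points, and the value at the apex is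
this residue. -/
structure IsConeCodeword (c : E → F) : Prop where
  mem : c ∈ hyperplaneCode F E
  eq_zero_or_one (x : E) : c x = 0 ∨ c x = 1
  apply_zero : c 0 = 1

variable {c : E → F}

theorem IsConeCodeword.comp (hc : IsConeCodeword c) {E' : Type*} [AddCommGroup E'] [Module F E']
    (L : E' →ₗ[F] E) : IsConeCodeword (c ∘ L) where
  mem := comp_mem_hyperplaneCode hc.mem L
  eq_zero_or_one x := hc.eq_zero_or_one (L x)
  apply_zero := by rw [Function.comp_apply, map_zero, hc.apply_zero]

theorem IsConeCodeword.eq_one_of_ne_zero (hc : IsConeCodeword c) {x : E} (hx : c x ≠ 0) :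
    c x = 1 := (hc.eq_zero_or_one x).resolve_left hx

variable [Fintype F] {u v w : E}

theorem IsConeCodeword.cast_affineCount (hc : IsConeCodeword c) (u w : E) :
    (affineCount c u w : F) = ∑ z : F, c (w + z • u) := by
  classical
  rw [affineCount, affineSupport, Finset.card_filter, Nat.cast_sum]
  refine Finset.sum_congr rfl fun z _ => ?_
  rcases hc.eq_zero_or_one (w + z • u) with h | h <;> simp [h]

theorem IsConeCodeword.dvd_affineCount_sub_one (hc : IsConeCodeword c) (p : ℕ) [CharP F p]
    (hu : c u = 0) (w : E) : (p : ℤ) ∣ affineCount c u w - 1 := by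
  have hline := sum_add_smul_add_apply_of_mem_hyperplaneCode hc.mem u w
  rw [← CharP.intCast_eq_zero_iff F p, Int.cast_sub, Int.cast_natCast, Int.cast_one,
    hc.cast_affineCount, ← hc.apply_zero, ← hline, hu, add_zero, sub_self]

theorem IsConeCodeword.affineCount_pos (hc : IsConeCodeword c) (hu : c u = 0) (w : E) :
    0 < affineCount c u w := by
  have hline := sum_add_smul_add_apply_of_mem_hyperplaneCode hc.mem u w
  rw [hu, add_zero, hc.apply_zero, ← hc.cast_affineCount] at hline
  exact Nat.pos_of_ne_zero fun h => by simp [h] at hline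

theorem exists_apply_eq_zero_of_affineCount_lt (h : affineCount c u w < Fintype.card F) :
    ∃ z : F, c (w + z • u) = 0 := by
  contrapose! h
  simp [affineCount, affineSupport, h]

theorem exists_apply_ne_zero_of_affineCount_pos (h : 0 < affineCount c u w) :
    ∃ z : F, c (w + z • u) ≠ 0 := by
  classical
  obtain ⟨z, hz⟩ := Finset.card_pos.1 h
  exact ⟨z, mem_affineSupport.1 hz⟩

end ConeCodeword

section LongLine
variable {F : Type*} [Field F] [Fintype F] {E : Type*} [AddCommGroup E] [Module F E] [Finite E]
  {c : E → F} {u v w : E}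

/-- The Szőnyi–Weiner inequality for the symmetric difference of `c` with the line through `u` and
`v`, along another line through the point `u` off `c`. -/
theorem IsConeCodeword.mul_add_le_of_add_pointCount_eq (hc : IsConeCodeword c)
    (huvw : LinearIndependent F ![u, v, w]) (hu : c u = 0) (t z : F) {k : ℕ}
    (hk : k + pointCount c (Submodule.span F {w + t • v + z • u}) =
      affineCount c u (w + t • v) + 1) (hkF : 2 * k ≤ Fintype.card F) :
    k * (Fintype.card F + 2) + pointCount c (Submodule.span F {w + t • v + z • u}) +
        2 * affineCount c u v ≤
      pointCount c (Submodule.span F {u, v, w}) + (Fintype.card F + 1) + k ^ 2 := by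
  obtain ⟨φ, hφu, hφv, hφw⟩ := exists_dual_eq_zero_ne_zero huvw
  have hd : c - kerIndicator φ ∈ hyperplaneCode F E :=
    sub_mem hc.mem (kerIndicator_mem_hyperplaneCode φ)
  have huv := (linearIndependent_triple_iff_notMem.1 huvw).1
  have hu0 := (linearIndependent_pair_iff_notMem.1 huv).1
  have hxuv := linearIndependent_triple_add_smul huvw t z
  have hxu := (linearIndependent_triple_iff_notMem.1 hxuv).1
  have hx0 := (linearIndependent_pair_iff_notMem.1 hxu).1
  have hφx : φ (w + t • v + z • u) ≠ 0 := by simpa [hφu, hφv] using hφw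
  have hx := pointCount_span_singleton_congr hd hc.mem hx0
    (by simp [kerIndicator_apply_of_ne_zero hφx])
  have hdu := pointCount_span_singleton_of_ne_zero hd hu0
    (by simp [hu, kerIndicator_apply_of_eq_zero hφu])
  have hcount := pointCount_span_singleton_add_affineCount hd z hxu
  rw [hx, hdu, affineCount_sub_kerIndicator_of_ne_zero c hφu (by simpa [hφv] using hφw)] at hcount
  have hline := pointCount_span_pair hc.mem huv
  rw [pointCount_span_singleton_of_eq_zero hc.mem hu0 hu] at hline
  have hplane := pointCount_sub_kerIndicator_add hc.mem hc.eq_zero_or_one huvw hφu hφv hφw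
  have hdk : affineCount (c - kerIndicator φ) (w + t • v + z • u) u = k := by lia
  have hSW := affineCount_mul_add_le hd hxuv (by rwa [hdk])
  rw [hdk, hx, span_triple_add_smul] at hSW
  lia

theorem IsConeCodeword.affineCount_add_one_mul_add_le (hc : IsConeCodeword c)
    (huvw : LinearIndependent F ![u, v, w]) (hu : c u = 0) (t : F)
    (hle : 2 * (affineCount c u (w + t • v) + 1) ≤ Fintype.card F) :
    (affineCount c u (w + t • v) + 1) * (Fintype.card F + 2) + 2 * affineCount c u v ≤
      pointCount c (Submodule.span F {u, v, w}) + (Fintype.card F + 1) +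
        (affineCount c u (w + t • v) + 1) ^ 2 := by
  obtain ⟨z, hz⟩ := exists_apply_eq_zero_of_affineCount_lt
    (c := c) (u := u) (w := w + t • v) (by lia)
  have hx0 : w + t • v + z • u ≠ 0 := (linearIndependent_triple_add_smul huvw t z).ne_zero 0
  have hx := pointCount_span_singleton_of_eq_zero hc.mem hx0 hz
  simpa only [hx, add_zero] using
    hc.mul_add_le_of_add_pointCount_eq huvw hu t z (by rw [hx, add_zero]) hle

theorem IsConeCodeword.affineCount_mul_add_le (hc : IsConeCodeword c)
    (huvw : LinearIndependent F ![u, v, w]) (hu : c u = 0) (t : F)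
    (hle : 2 * affineCount c u (w + t • v) ≤ Fintype.card F) :
    affineCount c u (w + t • v) * (Fintype.card F + 2) + 1 + 2 * affineCount c u v ≤
      pointCount c (Submodule.span F {u, v, w}) + (Fintype.card F + 1) +
        affineCount c u (w + t • v) ^ 2 := by
  obtain ⟨z, hz⟩ := exists_apply_ne_zero_of_affineCount_pos (hc.affineCount_pos hu (w + t • v))
  have hx0 : w + t • v + z • u ≠ 0 := (linearIndependent_triple_add_smul huvw t z).ne_zero 0
  have hx := pointCount_span_singleton_of_ne_zero hc.mem hx0 hz
  simpa only [hx] using hc.mul_add_le_of_add_pointCount_eq huvw hu t z (by rw [hx]) hle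

theorem IsConeCodeword.mul_add_le_of_affineCount_add_eq (hc : IsConeCodeword c)
    (huvw : LinearIndependent F ![u, v, w]) (hu : c u = 0) (t : F) {β : ℕ}
    (hβ : affineCount c u (w + t • v) + β = Fintype.card F + 1) (hβF : 2 * β ≤ Fintype.card F) :
    β * (Fintype.card F + 2) + (Fintype.card F + 1) ≤
      pointCount c (Submodule.span F {u, v, w}) + 2 * β + β ^ 2 := by
  obtain ⟨z, hz⟩ := exists_apply_ne_zero_of_affineCount_pos (hc.affineCount_pos hu (w + t • v))
  have hxuv := linearIndependent_triple_add_smul huvw t z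
  have hxu := (linearIndependent_triple_iff_notMem.1 hxuv).1
  have hu0 : u ≠ 0 := huvw.ne_zero 0
  have hcount := pointCount_span_singleton_add_affineCount hc.mem z hxu
  rw [← pointCount_span_pair hc.mem hxu, pointCount_span_singleton_of_eq_zero hc.mem hu0 hu,
    zero_add] at hcount
  rw [← span_triple_add_smul u v w t z]
  exact mul_add_le_of_pointCount_add_eq hc.mem hc.eq_zero_or_one hxuv (hc.eq_one_of_ne_zero hz)
    (by rwa [hcount]) hβF

theorem IsConeCodeword.le_sum_affineCount_sub_one_sq (hc : IsConeCodeword c) {p q : ℕ} [CharP F p]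
    (hp : p.Prime) (hpq : p ∣ q) (hq : 4 < q) (hF : Fintype.card F = q ^ 2)
    (huvw : LinearIndependent F ![u, v, w]) (hu : c u = 0)
    (hlong : q ^ 2 + 1 ≤ affineCount c u v + q) :
    (q : ℤ) ^ 4 - q ^ 3 + q ≤ ∑ t : F, ((affineCount c u (w + t • v) : ℤ) - 1) ^ 2 := by
  have hu0 : u ≠ 0 := huvw.ne_zero 0
  have huv := (linearIndependent_triple_iff_notMem.1 huvw).1
  have hcard : (Fintype.card F : ℤ) = q ^ 2 := by exact_mod_cast hF
  have hcount_le (x : E) : affineCount c u x ≤ q ^ 2 := hF ▸ Finset.card_le_univ _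
  have hv := hcount_le v
  have hplane : (pointCount c (Submodule.span F {u, v, w}) : ℤ) =
      affineCount c u v + ∑ t : F, ((affineCount c u (w + t • v) : ℤ) - 1) + q ^ 2 := by
    rw [pointCount_span_triple hc.mem huvw, pointCount_span_pair hc.mem huv,
      pointCount_span_singleton_of_eq_zero hc.mem hu0 hu, Finset.sum_sub_distrib]
    simp [hcard, add_assoc]
  refine le_sum_sq_of_forall_dvd (p := p) (by exact_mod_cast hp.two_le) (by exact_mod_cast hpq)
    (by lia) (fun h5 => ?_) hcard (fun t => ?_) (fun t => ?_)
    (fun t => hc.dvd_affineCount_sub_one p hu _) (fun t hle => ?_) (fun t hle => ?_)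
    (fun t hle => ?_)
  · have hq5 : q = 5 := by exact_mod_cast h5
    exact_mod_cast (Nat.prime_dvd_prime_iff_eq hp (by norm_num)).1 (hq5 ▸ hpq)
  · linarith [hc.affineCount_pos hu (w + t • v)]
  · linarith [hcount_le (w + t • v)]
  · have hSW := hc.affineCount_add_one_mul_add_le huvw hu t (by lia)
    zify at hSW hlong hv
    lia
  · have hSW := hc.affineCount_mul_add_le huvw hu t (by lia)
    zify at hSW hlong hv
    lia
  · obtain ⟨β, hβ⟩ := Nat.exists_eq_add_of_le ((hcount_le (w + t • v)).trans (Nat.le_succ _))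
    have hSW := hc.mul_add_le_of_affineCount_add_eq huvw hu t (hF ▸ hβ.symm) (by lia)
    zify at hSW hlong hv hβ
    have hy : (affineCount c u (w + t • v) : ℤ) = q ^ 2 + 1 - β := by lia
    rw [hy]
    lia

end LongLine

section DualCounting
variable {F : Type*} [Field F] [Fintype F] {E : Type*} [AddCommGroup E] [Module F E] [Finite E]
  [Fintype (Dual F E)] {U : Submodule F E}

open scoped Classical in
theorem card_filter_le_ker (U : Submodule F E) :
    ({φ | U ≤ LinearMap.ker φ} : Finset (Dual F E)).card =
      Fintype.card F ^ (finrank F E - finrank F U) := by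
  have hcard : Nat.card U.dualAnnihilator = Fintype.card F ^ finrank F U.dualAnnihilator := by
    rw [← Nat.card_eq_fintype_card]
    exact Module.natCard_eq_pow_finrank (K := F) (V := U.dualAnnihilator)
  rw [← Subspace.finrank_add_finrank_dualAnnihilator_eq U, Nat.add_sub_cancel_left, ← hcard,
    ← Fintype.card_subtype, ← Nat.card_eq_fintype_card]
  exact Nat.card_congr (Equiv.subtypeEquivRight fun φ => (Submodule.mem_dualAnnihilator φ).symm)

open scoped Classical in
theorem card_filter_le_ker_and_mem_ker {x : E} (hx : x ∉ U) {k : ℕ}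
    (hk : finrank F E = finrank F U + (k + 1)) :
    ({φ | U ≤ LinearMap.ker φ ∧ x ∈ LinearMap.ker φ} : Finset (Dual F E)).card =
      Fintype.card F ^ k := by
  simp only [← Submodule.span_singleton_le_iff_mem, ← sup_le_iff]
  rw [card_filter_le_ker, Submodule.finrank_sup_span_singleton hx, hk]
  congr 1
  lia

open scoped Classical in
theorem card_filter_le_ker_and_mem_ker_and_mem_ker {x : E} (hx : x ∉ U) (y : E) {k : ℕ}
    (hk : finrank F E = finrank F U + (k + 2)) :
    (({φ | U ≤ LinearMap.ker φ ∧ x ∈ LinearMap.ker φ ∧ y ∈ LinearMap.ker φ} :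
        Finset (Dual F E)).card : ℤ) =
      (Fintype.card F : ℤ) ^ k + if y ∈ U ⊔ Submodule.span F {x} then
        ((Fintype.card F : ℤ) - 1) * Fintype.card F ^ k else 0 := by
  simp only [← Submodule.span_singleton_le_iff_mem _ (LinearMap.ker _), ← sup_le_iff, ← sup_assoc]
  have hUx := Submodule.finrank_sup_span_singleton hx
  split_ifs with hy
  · rw [sup_eq_left.2 ((Submodule.span_singleton_le_iff_mem _ _).2 hy), card_filter_le_ker, hUx,
      hk, show finrank F U + (k + 2) - (finrank F U + 1) = k + 1 by lia]
    push_cast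
    ring
  · rw [card_filter_le_ker, Submodule.finrank_sup_span_singleton hy, hUx, hk,
      show finrank F U + (k + 2) - (finrank F U + 1 + 1) = k by lia, add_zero, Nat.cast_pow]

open scoped Classical in
theorem sum_card_filter_mem_ker {T : Finset E} (hT : ∀ x ∈ T, x ∉ U) {k : ℕ}
    (hk : finrank F E = finrank F U + (k + 1)) :
    ∑ φ : Dual F E with U ≤ LinearMap.ker φ, {x ∈ T | x ∈ LinearMap.ker φ}.card =
      T.card * Fintype.card F ^ k := by
  refine (Finset.sum_card_bipartiteAbove_eq_sum_card_bipartiteBelow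
    (fun (φ : Dual F E) x => x ∈ LinearMap.ker φ)).trans ?_
  refine Finset.sum_const_nat fun x hx => ?_
  rw [Finset.bipartiteBelow, Finset.filter_filter, card_filter_le_ker_and_mem_ker (hT x hx) hk]

open scoped Classical in
theorem sum_card_filter_mem_ker_sq {T : Finset E} (hT : ∀ x ∈ T, x ∉ U) {k : ℕ}
    (hk : finrank F E = finrank F U + (k + 2)) :
    ∑ φ : Dual F E with U ≤ LinearMap.ker φ, ({x ∈ T | x ∈ LinearMap.ker φ}.card : ℤ) ^ 2 =
      (T.card : ℤ) ^ 2 * (Fintype.card F : ℤ) ^ k +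
        ((Fintype.card F : ℤ) - 1) * (Fintype.card F : ℤ) ^ k *
          ∑ x ∈ T, ({y ∈ T | y ∈ U ⊔ Submodule.span F {x}}.card : ℤ) := by
  have hsq (φ : Dual F E) : ({x ∈ T | x ∈ LinearMap.ker φ}.card : ℤ) ^ 2 =
      {xy ∈ T ×ˢ T | xy.1 ∈ LinearMap.ker φ ∧ xy.2 ∈ LinearMap.ker φ}.card := by
    rw [sq, ← Nat.cast_mul, ← Finset.card_product, ← Finset.filter_product]
  have hswap := Finset.sum_card_bipartiteAbove_eq_sum_card_bipartiteBelow
    (fun (φ : Dual F E) (xy : E × E) => xy.1 ∈ LinearMap.ker φ ∧ xy.2 ∈ LinearMap.ker φ)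
    (s := {φ | U ≤ LinearMap.ker φ}) (t := T ×ˢ T)
  simp only [Finset.bipartiteBelow, Finset.bipartiteAbove, Finset.filter_filter,
    Finset.sum_product] at hswap
  simp only [hsq, ← Nat.cast_sum, hswap]
  simp only [Nat.cast_sum]
  rw [Finset.sum_congr rfl fun x hx => Finset.sum_congr rfl fun y _ =>
    card_filter_le_ker_and_mem_ker_and_mem_ker (hT x hx) y hk]
  simp only [Finset.sum_add_distrib, ← Finset.sum_filter, Finset.sum_const, nsmul_eq_mul,
    ← Finset.sum_mul]
  ring

end DualCounting

section NonzeroSupport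
variable {F : Type*} [Zero F] {E : Type*} [Zero E] [Fintype E] {c : E → F}

open scoped Classical in
/-- The nonzero vectors on the points of the support of a word. -/
noncomputable def nonzeroSupport (c : E → F) : Finset E := {x | x ≠ 0 ∧ c x ≠ 0}

theorem mem_nonzeroSupport {x : E} : x ∈ nonzeroSupport c ↔ x ≠ 0 ∧ c x ≠ 0 := by
  classical simp [nonzeroSupport]

end NonzeroSupport

section HyperplaneMoments
variable {F : Type*} [Field F] {E : Type*} [AddCommGroup E] [Module F E] {c : E → F}
  {U : Submodule F E}

variable (F) in
theorem card_sub_one_ne_zero [Fintype F] : (Fintype.card F : ℤ) - 1 ≠ 0 := by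
  have := Fintype.one_lt_card (α := F)
  lia

variable [Fintype E]

theorem notMem_of_mem_nonzeroSupport (hc : c ∈ hyperplaneCode F E) (hU : pointCount c U = 0)
    {x : E} (hx : x ∈ nonzeroSupport c) : x ∉ U := by
  obtain ⟨hx0, hcx⟩ := mem_nonzeroSupport.1 hx
  have : Finite (ℙ F E) := inferInstance
  rw [pointCount, Set.ncard_eq_zero] at hU
  intro hxU
  have hmem : Projectivization.mk F x hx0 ∈ {P : ℙ F E | P.submodule ≤ U ∧ c P.rep ≠ 0} :=
    ⟨by rwa [Projectivization.submodule_mk, Submodule.span_singleton_le_iff_mem],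
      by rwa [apply_rep_mk hc]⟩
  exact (hU ▸ hmem : Projectivization.mk F x hx0 ∈ (∅ : Set (ℙ F E)))

variable [Fintype F]

open scoped Classical in
theorem card_filter_mem_nonzeroSupport (hc : c ∈ hyperplaneCode F E) (L : Submodule F E) :
    ({x ∈ nonzeroSupport c | x ∈ L}.card : ℤ) = (Fintype.card F - 1) * pointCount c L := by
  have h := ncard_support_eq_mul_pointCount hc L
  have hcoe : {x | x ∈ L ∧ x ≠ 0 ∧ c x ≠ 0} =
      ((nonzeroSupport c).filter (· ∈ L) : Finset E) := by
    ext x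
    simp [mem_nonzeroSupport, and_comm]
  rw [hcoe, Set.ncard_coe_finset, Nat.card_eq_fintype_card] at h
  rw [h, Nat.cast_mul, Nat.cast_pred Fintype.card_pos]

theorem card_nonzeroSupport (hc : c ∈ hyperplaneCode F E) :
    ((nonzeroSupport c).card : ℤ) = (Fintype.card F - 1) * pointCount c (⊤ : Submodule F E) := by
  classical
  simp [← card_filter_mem_nonzeroSupport hc]

variable [Fintype (Dual F E)]

open scoped Classical in
omit [Fintype E] in
theorem sum_pointCount_ker [Finite E] (hc : c ∈ hyperplaneCode F E) (hU : pointCount c U = 0)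
    {k : ℕ} (hk : finrank F E = finrank F U + (k + 1)) :
    ∑ φ : Dual F E with U ≤ LinearMap.ker φ, (pointCount c (LinearMap.ker φ) : ℤ) =
      pointCount c (⊤ : Submodule F E) * (Fintype.card F : ℤ) ^ k := by
  have := Fintype.ofFinite E
  have h := sum_card_filter_mem_ker (T := nonzeroSupport c)
    (fun x hx => notMem_of_mem_nonzeroSupport hc hU hx) hk
  zify at h
  simp only [card_filter_mem_nonzeroSupport hc, card_nonzeroSupport hc, ← Finset.mul_sum] at h
  exact mul_left_cancel₀ (card_sub_one_ne_zero F) (by rw [h, mul_assoc])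

open scoped Classical in
theorem sum_pointCount_ker_sq (hc : c ∈ hyperplaneCode F E) (hU : pointCount c U = 0) {k : ℕ}
    (hk : finrank F E = finrank F U + (k + 2)) :
    ∑ φ : Dual F E with U ≤ LinearMap.ker φ, (pointCount c (LinearMap.ker φ) : ℤ) ^ 2 =
      ((pointCount c (⊤ : Submodule F E) : ℤ) ^ 2 + ∑ x ∈ nonzeroSupport c,
        (pointCount c (U ⊔ Submodule.span F {x}) : ℤ)) * (Fintype.card F : ℤ) ^ k := by
  have h := sum_card_filter_mem_ker_sq (T := nonzeroSupport c)
    (fun x hx => notMem_of_mem_nonzeroSupport hc hU hx) hk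
  simp only [card_filter_mem_nonzeroSupport hc, card_nonzeroSupport hc, mul_pow,
    ← Finset.mul_sum] at h
  exact mul_left_cancel₀ (pow_ne_zero 2 (card_sub_one_ne_zero F)) (by linear_combination h)

open scoped Classical in
theorem sum_mul_pointCount_ker_sub_mul_sub (hc : c ∈ hyperplaneCode F E)
    (hU : pointCount c U = 0) {k : ℕ} (hk : finrank F E = finrank F U + (k + 2)) (d a b : ℤ) :
    ∑ φ : Dual F E with U ≤ LinearMap.ker φ,
        (d * pointCount c (LinearMap.ker φ) - a) * (d * pointCount c (LinearMap.ker φ) - b) =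
      ((d * pointCount c (⊤ : Submodule F E)) ^ 2 + d ^ 2 * ∑ x ∈ nonzeroSupport c,
        (pointCount c (U ⊔ Submodule.span F {x}) : ℤ)) * (Fintype.card F : ℤ) ^ k -
      (a + b) * (d * pointCount c (⊤ : Submodule F E)) * (Fintype.card F : ℤ) ^ (k + 1) +
      a * b * (Fintype.card F : ℤ) ^ (k + 2) := by
  have hcard := card_filter_le_ker U
  rw [hk, Nat.add_sub_cancel_left] at hcard
  have hexpand (φ : Dual F E) :
      (d * pointCount c (LinearMap.ker φ) - a) * (d * pointCount c (LinearMap.ker φ) - b) =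
        d ^ 2 * (pointCount c (LinearMap.ker φ) : ℤ) ^ 2 -
          d * (a + b) * pointCount c (LinearMap.ker φ) + a * b := by ring
  simp only [hexpand, Finset.sum_add_distrib, Finset.sum_sub_distrib, ← Finset.mul_sum,
    sum_pointCount_ker_sq hc hU hk, sum_pointCount_ker hc hU hk, Finset.sum_const, hcard,
    nsmul_eq_mul, Nat.cast_pow]
  ring

end HyperplaneMoments

section AffineCountMoments
variable {F : Type*} [Field F] [Fintype F] {E : Type*} [AddCommGroup E] [Module F E]

theorem affineCount_add_smul (c : E → F) (u w : E) (t : F) :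
    affineCount c u (w + t • u) = affineCount c u w := by
  classical
  simp only [affineCount, affineSupport, Finset.card_filter, add_assoc, ← add_smul]
  exact Equiv.sum_comp (Equiv.addLeft t) fun z => if c (w + z • u) ≠ 0 then 1 else 0

theorem IsConeCodeword.affineSupport_zero {c : E → F} (hc : IsConeCodeword c) {u : E}
    (hu : c u = 0) : affineSupport c u 0 = {0} := by
  ext z
  rw [mem_affineSupport, Finset.mem_singleton]
  by_cases hz : z = 0
  · simp [hz, hc.apply_zero]
  · simp [hz, apply_smul_of_mem_hyperplaneCode hc.mem hz, hu]

variable [Fintype E]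

theorem sum_sum_add_smul (g : E → ℤ) (u : E) :
    ∑ w, ∑ z : F, g (w + z • u) = Fintype.card F * ∑ w, g w := by
  have hshift (z : F) : ∑ w, g (w + z • u) = ∑ w, g w := Equiv.sum_comp (Equiv.addRight (z • u)) g
  rw [Finset.sum_comm, Finset.sum_congr rfl fun z _ => hshift z, Finset.sum_const,
    Finset.card_univ, nsmul_eq_mul]

theorem sum_affineCount_mul {c : E → F} (hc : IsConeCodeword c) (u : E) {g : E → ℤ}
    (hg : ∀ w (z : F), g (w + z • u) = g w) :
    ∑ w, affineCount c u w * g w = Fintype.card F * (g 0 + ∑ x ∈ nonzeroSupport c, g x) := by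
  classical
  have hline (w : E) : affineCount c u w * g w =
      ∑ z : F, (if c (w + z • u) ≠ 0 then g (w + z • u) else 0) := by
    simp only [hg, ← Finset.sum_filter, Finset.sum_const, nsmul_eq_mul, affineCount,
      affineSupport]
  have hsupp : ({x | c x ≠ 0} : Finset E) = insert 0 (nonzeroSupport c) := by
    ext x
    by_cases hx : x = 0 <;> simp [mem_nonzeroSupport, hx, hc.apply_zero]
  rw [Finset.sum_congr rfl fun w _ => hline w,
    sum_sum_add_smul (fun x => if c x ≠ 0 then g x else 0) u, ← Finset.sum_filter, hsupp,
    Finset.sum_insert fun h => (mem_nonzeroSupport.1 h).1 rfl]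

theorem sum_affineCount_sub_one_sq {c : E → F} (hc : IsConeCodeword c) {u : E} (hu : c u = 0) :
    ∑ w, ((affineCount c u w : ℤ) - 1) ^ 2 = (Fintype.card F : ℤ) ^ finrank F E +
      Fintype.card F * (∑ x ∈ nonzeroSupport c, (affineCount c u x : ℤ) -
        2 * (nonzeroSupport c).card - 1) := by
  have hone := sum_affineCount_mul hc u (g := fun _ => 1) fun _ _ => rfl
  have hself := sum_affineCount_mul hc u (g := fun w => (affineCount c u w : ℤ))
    fun w z => by rw [affineCount_add_smul]
  have hexpand (w : E) : ((affineCount c u w : ℤ) - 1) ^ 2 =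
      affineCount c u w * affineCount c u w - 2 * (affineCount c u w * 1) + 1 := by ring
  simp only [hexpand, Finset.sum_add_distrib, Finset.sum_sub_distrib, ← Finset.mul_sum]
  rw [hself, hone, affineCount, hc.affineSupport_zero hu, Finset.card_singleton,
    Finset.sum_const, Finset.sum_const, Finset.card_univ,
    Module.card_eq_pow_finrank (K := F) (V := E)]
  push_cast
  ring

end AffineCountMoments

section QuasiHermitian
variable {F : Type*} [Field F] {E : Type*} [AddCommGroup E] [Module F E]

/-- The codewords of quasi-Hermitian varieties of the projective space of `E`, of dimension
`r = m + 2`; here `ε` is the sign `(-1) ^ r`. The point numbers are multiplied by `q ^ 2 - 1`. -/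
structure IsQuasiHermitianCodeword (q m : ℕ) (ε : ℤ) (c : E → F) : Prop extends
    IsConeCodeword c where
  finrank_eq : finrank F E = m + 3
  sign_eq : ε = 1 ∨ ε = -1
  pointCount_top : ((q : ℤ) ^ 2 - 1) * pointCount c (⊤ : Submodule F E) =
    ((q : ℤ) ^ (m + 3) + ε) * ((q : ℤ) ^ (m + 2) - ε)
  pointCount_ker (φ : Dual F E) (hφ : φ ≠ 0) :
    ((q : ℤ) ^ 2 - 1) * pointCount c (LinearMap.ker φ) =
      ((q : ℤ) ^ (m + 2) - ε) * ((q : ℤ) ^ (m + 1) + ε) ∨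
    ((q : ℤ) ^ 2 - 1) * pointCount c (LinearMap.ker φ) =
      (q : ℤ) ^ 2 - 1 + (q : ℤ) ^ 2 * (((q : ℤ) ^ (m + 1) + ε) * ((q : ℤ) ^ m - ε))

variable [Fintype F] [Fintype E] {q m : ℕ} {ε : ℤ} {c : E → F} {u v : E}

theorem pointCount_span_singleton_sup_eq_affineCount (hc : c ∈ hyperplaneCode F E) (hu0 : u ≠ 0)
    (hu : c u = 0) {x : E} (hx : x ∈ nonzeroSupport c) :
    pointCount c (Submodule.span F {u} ⊔ Submodule.span F {x}) = affineCount c u x := by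
  have hpc := pointCount_span_singleton_of_eq_zero hc hu0 hu
  rw [← Submodule.span_insert, pointCount_span_pair hc (linearIndependent_pair_iff_notMem.2
    ⟨hu0, notMem_of_mem_nonzeroSupport hc hpc hx⟩), hpc, zero_add]

theorem IsQuasiHermitianCodeword.sum_affineCount_sub_one_sq
    (hc : IsQuasiHermitianCodeword q m ε c) (hq : 1 < q) (hF : Fintype.card F = q ^ 2)
    (hu0 : u ≠ 0) (hu : c u = 0) :
    ∑ w, ((affineCount c u w : ℤ) - 1) ^ 2 =
      (q : ℤ) ^ 3 * (q - 1) * (((q : ℤ) ^ (m + 2)) ^ 2 - ε * (q : ℤ) ^ (m + 2)) := by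
  classical
  have : Finite (Dual F E) := DFunLike.finite _
  have := Fintype.ofFinite (Dual F E)
  have hF' : (Fintype.card F : ℤ) = (q : ℤ) ^ 2 := by rw [hF, Nat.cast_pow]
  have hpc := pointCount_span_singleton_of_eq_zero hc.mem hu0 hu
  have hexpand := sum_mul_pointCount_ker_sub_mul_sub hc.mem hpc (k := m)
    (by rw [finrank_span_singleton hu0, hc.finrank_eq]; lia) ((q : ℤ) ^ 2 - 1)
    (((q : ℤ) ^ (m + 2) - ε) * ((q : ℤ) ^ (m + 1) + ε))
    ((q : ℤ) ^ 2 - 1 + (q : ℤ) ^ 2 * (((q : ℤ) ^ (m + 1) + ε) * ((q : ℤ) ^ m - ε)))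
  rw [Finset.sum_eq_single_of_mem 0 (by simp) fun φ _ hφ => by
      rcases hc.pointCount_ker φ hφ with h | h <;> rw [h] <;> ring, LinearMap.ker_zero,
    Finset.sum_congr rfl fun x hx => congrArg Nat.cast
      (pointCount_span_singleton_sup_eq_affineCount hc.mem hu0 hu hx)] at hexpand
  rw [_root_.sum_affineCount_sub_one_sq hc.toIsConeCodeword hu, card_nonzeroSupport hc.mem,
    hc.finrank_eq, hF']
  simp only [hF', hc.pointCount_top] at hexpand ⊢
  have hne : (((q : ℤ) ^ 2 - 1) * (q : ℤ) ^ m) ^ 2 ≠ 0 := by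
    have : (1 : ℤ) < (q : ℤ) ^ 2 := by exact_mod_cast Nat.one_lt_pow two_ne_zero hq
    have : (0 : ℤ) < (q : ℤ) ^ m := by positivity
    exact pow_ne_zero 2 (mul_ne_zero (by lia) (by lia))
  apply mul_left_cancel₀ hne
  rcases hc.sign_eq with rfl | rfl
  · linear_combination (-(q : ℤ) ^ 2) * hexpand
  · linear_combination (-(q : ℤ) ^ 2) * hexpand

end QuasiHermitian

section NoLongLine
variable {F : Type*} [Field F] {E : Type*} [AddCommGroup E] [Module F E]

theorem finrank_span_pair {u v : E} (huv : LinearIndependent F ![u, v]) :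
    finrank F (Submodule.span F {u, v}) = 2 := by
  rw [← Matrix.range_cons_cons_empty u v ![], finrank_span_eq_card huv, Fintype.card_fin]

variable [Fintype F]

theorem sum_sum_add_smul_le [Fintype E] {g : E → ℤ} (hg : ∀ w, 0 ≤ g w) (s : Finset E) (v : E) :
    ∑ w ∈ s, ∑ t : F, g (w + t • v) ≤ Fintype.card F * ∑ w, g w :=
  (Finset.sum_le_univ_sum_of_nonneg fun _ => Finset.sum_nonneg fun _ _ => hg _).trans_eq
    (sum_sum_add_smul g v)

open scoped Classical in
theorem card_filter_notMem [Fintype E] (L : Submodule F E) :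
    (({w | w ∉ L} : Finset E).card : ℤ) =
      (Fintype.card F : ℤ) ^ finrank F E - (Fintype.card F : ℤ) ^ finrank F L := by
  have hsplit := Finset.card_filter_add_card_filter_not (s := (Finset.univ : Finset E)) (· ∈ L)
  rw [Finset.card_univ, Module.card_eq_pow_finrank (K := F), ← Fintype.card_subtype,
    Module.card_eq_pow_finrank (K := F) (V := {x // x ∈ L})] at hsplit
  zify at hsplit
  exact eq_sub_of_add_eq' hsplit

theorem lt_of_pow_three_le_of_sign {q a ε : ℤ} (hq : 2 ≤ q) (ha : q ^ 3 ≤ a) (hε : ε = 1 ∨ ε = -1) :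
    q ^ 3 * (q - 1) * (a ^ 2 - ε * a) < (a ^ 2 - q ^ 2) * (q ^ 4 - q ^ 3 + q) := by
  have ha0 : 0 < a := lt_of_lt_of_le (by positivity) ha
  have hεa : q ^ 3 * (q - 1) * (a ^ 2 - ε * a) ≤ q ^ 3 * (q - 1) * (a ^ 2 + a) := by
    have : 0 ≤ q ^ 3 * (q - 1) := mul_nonneg (by positivity) (by lia)
    rcases hε with rfl | rfl <;> nlinarith
  have hmain : 0 ≤ a * q * (a - q ^ 3) := mul_nonneg (by positivity) (by lia)
  have hlow : 0 ≤ q ^ 3 * (a - q ^ 3) := mul_nonneg (by positivity) (by lia)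
  have hconst : 0 < q ^ 3 * (q ^ 2 - 1) := mul_pos (by positivity) (by nlinarith)
  nlinarith

theorem IsQuasiHermitianCodeword.affineCount_add_lt [Finite E] {p q m : ℕ} {ε : ℤ} {c : E → F}
    (hc : IsQuasiHermitianCodeword q m ε c) [CharP F p] (hp : p.Prime) (hpq : p ∣ q) (hq : 4 < q)
    (hm : 1 ≤ m) (hF : Fintype.card F = q ^ 2) {u v : E} (huv : LinearIndependent F ![u, v])
    (hu : c u = 0) : affineCount c u v + q < q ^ 2 + 1 := by
  classical
  have := Fintype.ofFinite E
  by_contra! hlong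
  have hu0 : u ≠ 0 := huv.ne_zero 0
  have hF' : (Fintype.card F : ℤ) = (q : ℤ) ^ 2 := by rw [hF, Nat.cast_pow]
  have hupper := sum_sum_add_smul_le (fun w => sq_nonneg ((affineCount c u w : ℤ) - 1))
    ({w | w ∉ Submodule.span F {u, v}} : Finset E) v (F := F)
  have hlower := Finset.card_nsmul_le_sum ({w | w ∉ Submodule.span F {u, v}} : Finset E)
    (fun w => ∑ t : F, ((affineCount c u (w + t • v) : ℤ) - 1) ^ 2) _ fun w hw =>
      hc.le_sum_affineCount_sub_one_sq hp hpq hq hF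
        (linearIndependent_triple_iff_notMem.2 ⟨huv, (Finset.mem_filter.1 hw).2⟩) hu hlong
  have ha : (q : ℤ) ^ 3 ≤ (q : ℤ) ^ (m + 2) := pow_le_pow_right₀ (by lia) (by lia)
  have hlt := lt_of_pow_three_le_of_sign (by lia) ha hc.sign_eq
  rw [nsmul_eq_mul, card_filter_notMem, finrank_span_pair huv, hc.finrank_eq, hF'] at hlower
  rw [hc.sum_affineCount_sub_one_sq (by lia) hF hu0 hu, hF'] at hupper
  refine (hlower.trans hupper).not_gt ?_
  have hscale := mul_lt_mul_of_pos_left hlt (show (0 : ℤ) < (q : ℤ) ^ 2 by positivity)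
  have hpow : ((q : ℤ) ^ 2) ^ (m + 3) = (q : ℤ) ^ 2 * ((q : ℤ) ^ (m + 2)) ^ 2 := by ring
  rw [hpow]
  linarith

end NoLongLine

section Line
variable {F : Type*} [Field F] {E : Type*} [AddCommGroup E] [Module F E]

theorem span_pair_eq_of_mem {L : Submodule F E} (hL : finrank F L = 2) {u v : E} (hu : u ∈ L)
    (hv : v ∈ L) (huv : LinearIndependent F ![u, v]) : Submodule.span F {u, v} = L := by
  have : FiniteDimensional F L := FiniteDimensional.of_finrank_pos (by lia)
  exact Submodule.eq_of_le_of_finrank_eq (Submodule.span_le.2 (Set.pair_subset hu hv))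
    (by rw [finrank_span_pair huv, hL])

theorem add_smul_ne_zero_of_linearIndependent {u v : E} (huv : LinearIndependent F ![u, v])
    (t : F) : v + t • u ≠ 0 := fun h0 =>
  (linearIndependent_pair_iff_notMem.1 huv).2 <|
    Submodule.mem_span_singleton.2 ⟨-t, by rw [neg_smul, neg_eq_of_add_eq_zero_left h0]⟩

theorem exists_span_pair_eq {L : Submodule F E} (hL : finrank F L = 2) {u : E} (hu : u ∈ L)
    (hu0 : u ≠ 0) : ∃ v, LinearIndependent F ![u, v] ∧ Submodule.span F {u, v} = L := by
  obtain ⟨v, hvL, hv⟩ : ∃ v ∈ L, v ∉ Submodule.span F {u} := by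
    by_contra! hle
    have hrank := Submodule.finrank_mono (show L ≤ Submodule.span F {u} from hle)
    rw [finrank_span_singleton hu0] at hrank
    lia
  have huv := linearIndependent_pair_iff_notMem.2 ⟨hu0, hv⟩
  exact ⟨v, huv, span_pair_eq_of_mem hL hu hvL huv⟩

theorem exists_linearIndependent_span_pair_eq {L : Submodule F E} (hL : finrank F L = 2) :
    ∃ u v, LinearIndependent F ![u, v] ∧ Submodule.span F {u, v} = L := by
  obtain ⟨u, huL, hu0⟩ := L.exists_mem_ne_zero_of_ne_bot (by rintro rfl; simp at hL)
  obtain ⟨v, huv, hspan⟩ := exists_span_pair_eq hL huL hu0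
  exact ⟨u, v, huv, hspan⟩

theorem linearIndependent_pair_of_apply_eq_zero {φ : Dual F E} {x b : E} (hx : φ x ≠ 0)
    (hb : φ b = 0) (hb0 : b ≠ 0) : LinearIndependent F ![x, b] := by
  rw [LinearIndependent.pair_symm_iff, linearIndependent_pair_iff_notMem]
  refine ⟨hb0, fun h => hx ?_⟩
  obtain ⟨s, rfl⟩ := Submodule.mem_span_singleton.1 h
  rw [map_smul, hb, smul_zero]

theorem finrank_ker_of_ne_zero {n : ℕ} (hE : finrank F E = n + 1) {φ : Dual F E} (hφ : φ ≠ 0) :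
    finrank F (LinearMap.ker φ) = n := by
  have : FiniteDimensional F E := FiniteDimensional.of_finrank_pos (by lia)
  have := Dual.finrank_ker_add_one_of_ne_zero hφ
  lia

theorem exists_span_pair_eq_ker (hE : finrank F E = 3) {φ : Dual F E} (hφ : φ ≠ 0) :
    ∃ u v, LinearIndependent F ![u, v] ∧ φ u = 0 ∧ φ v = 0 ∧
      Submodule.span F {u, v} = LinearMap.ker φ := by
  obtain ⟨u, v, huv, hspan⟩ :=
    exists_linearIndependent_span_pair_eq (finrank_ker_of_ne_zero hE hφ)
  exact ⟨u, v, huv, LinearMap.mem_ker.1 (hspan ▸ Submodule.subset_span (by simp)),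
    LinearMap.mem_ker.1 (hspan ▸ Submodule.subset_span (by simp)), hspan⟩

theorem span_triple_eq_top (hE : finrank F E = 3) {u v w : E}
    (h : LinearIndependent F ![u, v, w]) : Submodule.span F {u, v, w} = ⊤ := by
  rw [← h.span_eq_top_of_card_eq_finrank (by rw [Fintype.card_fin, hE]), Matrix.range_cons,
    Matrix.range_cons_cons_empty, Set.singleton_union]

theorem exists_linearIndependent_triple (hE : finrank F E = 3) {u v : E}
    (huv : LinearIndependent F ![u, v]) : ∃ w, LinearIndependent F ![u, v, w] := by
  have hne : Submodule.span F {u, v} ≠ ⊤ := fun h => by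
    have := finrank_span_pair huv
    rw [h, finrank_top] at this
    lia
  obtain ⟨w, -, hw⟩ := SetLike.exists_of_lt (lt_top_iff_ne_top.2 hne)
  exact ⟨w, linearIndependent_triple_iff_notMem.2 ⟨huv, hw⟩⟩

variable [Finite E] {c : E → F} {L : Submodule F E}

theorem exists_span_pair_eq_of_pointCount_lt [Fintype F] (hc : c ∈ hyperplaneCode F E)
    (hL : finrank F L = 2) (h : pointCount c L < Fintype.card F + 1) :
    ∃ u v, LinearIndependent F ![u, v] ∧ Submodule.span F {u, v} = L ∧ c u = 0 := by
  obtain ⟨u, v, huv, rfl⟩ := exists_linearIndependent_span_pair_eq hL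
  have hu0 : u ≠ 0 := huv.ne_zero 0
  by_cases hu : c u = 0
  · exact ⟨u, v, huv, rfl, hu⟩
  rw [pointCount_span_pair hc huv, pointCount_span_singleton_of_ne_zero hc hu0 hu] at h
  obtain ⟨z, hz⟩ := exists_apply_eq_zero_of_affineCount_lt (by lia : affineCount c u v < _)
  refine ⟨v + z • u, u, ?_, span_pair_add_smul u v z, hz⟩
  rwa [LinearIndependent.pair_symm_iff, add_comm, LinearIndependent.pair_add_smul_right_iff]

theorem exists_span_pair_eq_of_pointCount_pos [Finite F] (hc : c ∈ hyperplaneCode F E)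
    (hL : finrank F L = 2) (h : 0 < pointCount c L) :
    ∃ u v, LinearIndependent F ![u, v] ∧ Submodule.span F {u, v} = L ∧ c u ≠ 0 := by
  have := Fintype.ofFinite F
  obtain ⟨u, v, huv, rfl⟩ := exists_linearIndependent_span_pair_eq hL
  have hu0 : u ≠ 0 := huv.ne_zero 0
  by_cases hu : c u = 0
  · rw [pointCount_span_pair hc huv, pointCount_span_singleton_of_eq_zero hc hu0 hu, zero_add] at h
    obtain ⟨z, hz⟩ := exists_apply_ne_zero_of_affineCount_pos h
    refine ⟨v + z • u, u, ?_, span_pair_add_smul u v z, hz⟩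
    rwa [LinearIndependent.pair_symm_iff, add_comm, LinearIndependent.pair_add_smul_right_iff]
  · exact ⟨u, v, huv, rfl, hu⟩

theorem apply_ne_zero_of_card_lt_pointCount [Fintype F] (hc : c ∈ hyperplaneCode F E)
    (hL : finrank F L = 2) (h : Fintype.card F < pointCount c L) {x : E} (hx : x ∈ L)
    (hx0 : x ≠ 0) : c x ≠ 0 := fun hcx => by
  obtain ⟨v, hxv, rfl⟩ := exists_span_pair_eq hL hx hx0
  rw [pointCount_span_pair hc hxv, pointCount_span_singleton_of_eq_zero hc hx0 hcx, zero_add] at h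
  exact h.not_ge (Finset.card_le_univ _)

end Line

section PlaneSection
variable {F : Type*} [Field F] {E : Type*} [AddCommGroup E] [Module F E]

theorem le_add_one_of_mul_add_two_le {n q : ℕ} (hq : 4 < q) (hn : 2 * n ≤ q ^ 2)
    (h : n * (q ^ 2 + 2) ≤ q ^ 3 + 1 + n ^ 2) : n ≤ q + 1 := by
  by_contra! hlt
  zify at *
  nlinarith [mul_nonneg (show (0 : ℤ) ≤ n - (q + 2) by lia)
    (show (0 : ℤ) ≤ q ^ 2 - q - n by nlinarith)]

theorem le_of_mul_add_two_add_le {β q : ℕ} (hq : 4 < q) (hβ : 2 * β ≤ q ^ 2)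
    (h : β * (q ^ 2 + 2) + (q ^ 2 + 1) ≤ q ^ 3 + 1 + 2 * β + β ^ 2) : β ≤ q := by
  by_contra! hlt
  zify at *
  nlinarith [mul_nonneg (show (0 : ℤ) ≤ β - (q + 1) by lia)
    (show (0 : ℤ) ≤ q ^ 2 - q - 1 - β by nlinarith)]

/-- The codeword of a plane section with `q ^ 3 + 1` points such that every line that is not
contained in it misses it in more than `q` points. -/
structure IsPlaneSectionCodeword (q : ℕ) (c : E → F) : Prop extends IsConeCodeword c where
  finrank_eq : finrank F E = 3
  pointCount_top : pointCount c (⊤ : Submodule F E) = q ^ 3 + 1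
  pointCount_add_lt {L : Submodule F E} (hL : finrank F L = 2)
    (hlt : pointCount c L < q ^ 2 + 1) : pointCount c L + q < q ^ 2 + 1

/-- The codeword of a unital. -/
structure IsUnitalCodeword (q : ℕ) (c : E → F) : Prop extends IsConeCodeword c where
  finrank_eq : finrank F E = 3
  pointCount_top : pointCount c (⊤ : Submodule F E) = q ^ 3 + 1
  pointCount_eq_or {L : Submodule F E} (hL : finrank F L = 2) :
    pointCount c L = 1 ∨ pointCount c L = q + 1

variable [Fintype F] [Finite E] {p q : ℕ} {c : E → F} {L : Submodule F E}

theorem IsPlaneSectionCodeword.pointCount_le_of_lt (hc : IsPlaneSectionCodeword q c) [CharP F p]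
    (hp : p.Prime) (hpq : p ∣ q) (hq : 4 < q) (hF : Fintype.card F = q ^ 2)
    (hL : finrank F L = 2) (hlt : pointCount c L < q ^ 2 + 1) : pointCount c L ≤ q + 1 := by
  have hmiss := hc.pointCount_add_lt hL hlt
  obtain ⟨u, v, huv, rfl, hu⟩ := exists_span_pair_eq_of_pointCount_lt hc.mem hL (hF.symm ▸ hlt)
  have hu0 : u ≠ 0 := huv.ne_zero 0
  have hpu := pointCount_span_singleton_of_eq_zero hc.mem hu0 hu
  have hline := pointCount_span_pair hc.mem huv
  rw [hpu, zero_add] at hline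
  rcases le_or_gt (2 * affineCount c u v) (Fintype.card F) with hsmall | hlarge
  · obtain ⟨w, huvw⟩ := exists_linearIndependent_triple hc.finrank_eq huv
    have hSW := _root_.affineCount_mul_add_le hc.mem huvw hsmall
    rw [span_triple_eq_top hc.finrank_eq huvw, hc.pointCount_top, hpu, hF] at hSW
    exact hline ▸ le_add_one_of_mul_add_two_le hq (hF ▸ hsmall) hSW
  · exfalso
    obtain ⟨β, hβ⟩ := Nat.exists_eq_add_of_lt hlt
    have hβF : 2 * (β + 1) ≤ q ^ 2 := by
      by_contra! hlt2
      have hdvd : (p : ℤ) ∣ q ^ 2 - 2 * (affineCount c u v - 1) := dvd_sub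
        (dvd_pow (Int.natCast_dvd_natCast.2 hpq) two_ne_zero)
        ((hc.dvd_affineCount_sub_one p hu v).mul_left 2)
      have hone : (q : ℤ) ^ 2 - 2 * (affineCount c u v - 1) = 1 := by zify at *; lia
      exact hp.one_lt.ne' (Nat.dvd_one.1 (by exact_mod_cast hone ▸ hdvd))
    obtain ⟨x, y, hxy, hspan, hx⟩ :=
      exists_span_pair_eq_of_pointCount_pos hc.mem hL (by lia)
    obtain ⟨w, hxyw⟩ := exists_linearIndependent_triple hc.finrank_eq hxy
    have hSW := mul_add_le_of_pointCount_add_eq hc.mem hc.eq_zero_or_one hxyw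
      (hc.eq_one_of_ne_zero hx) (β := β + 1) (by rw [hspan, hF]; lia) (hF ▸ hβF)
    rw [span_triple_eq_top hc.finrank_eq hxyw, hc.pointCount_top, hF] at hSW
    have := le_of_mul_add_two_add_le hq hβF hSW
    lia

theorem IsPlaneSectionCodeword.exists_apply_eq_zero_notMem (hc : IsPlaneSectionCodeword q c)
    (hq : 4 < q) (hF : Fintype.card F = q ^ 2) (hL : finrank F L = 2) : ∃ x ∉ L, c x = 0 := by
  obtain ⟨u, v, huv, rfl⟩ := exists_linearIndependent_span_pair_eq hL
  obtain ⟨w, huvw⟩ := exists_linearIndependent_triple hc.finrank_eq huv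
  by_contra! hne
  have hfull (t : F) : affineCount c u (w + t • v) = q ^ 2 := by
    rw [← hF]
    refine (Finset.card_le_univ _).antisymm (not_lt.1 fun hlt => ?_)
    obtain ⟨z, hz⟩ := exists_apply_eq_zero_of_affineCount_lt hlt
    refine hne (w + t • v + z • u) (fun hmem => ?_) hz
    rw [add_assoc, Submodule.add_mem_iff_left _ (Submodule.mem_span_pair.2 ⟨z, t, add_comm _ _⟩)]
      at hmem
    exact (linearIndependent_triple_iff_notMem.1 huvw).2 hmem
  have hplane := pointCount_span_triple hc.mem huvw
  simp only [span_triple_eq_top hc.finrank_eq huvw, hc.pointCount_top, hfull, Finset.sum_const,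
    Finset.card_univ, hF, smul_eq_mul] at hplane
  nlinarith [pow_pos (show 0 < q by lia) 3]

end PlaneSection

section Unital
variable {F : Type*} [Field F] {E : Type*} [AddCommGroup E] [Module F E]

theorem affineCount_sub_kerIndicator_add_one [Fintype F] {c : E → F}
    {φ : Dual F E} {x b : E} (hx : φ x ≠ 0) (hb : φ b = 0) (hcb : c b = 1) :
    affineCount (c - kerIndicator φ) x b + 1 = affineCount c x b := by
  classical
  have hiff (z : F) : (c - kerIndicator φ) (b + z • x) ≠ 0 ↔ z ≠ 0 ∧ c (b + z • x) ≠ 0 := by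
    by_cases hz : z = 0
    · simp [hz, hcb, kerIndicator_apply_of_eq_zero hb]
    · simp [hz, kerIndicator_apply_of_ne_zero (show φ (b + z • x) ≠ 0 by simp [hb, hz, hx])]
  have hinsert : affineSupport c x b =
      insert 0 (affineSupport (c - kerIndicator φ) x b) := by
    ext z
    rw [Finset.mem_insert, mem_affineSupport, mem_affineSupport, hiff]
    by_cases hz : z = 0 <;> simp [hz, hcb]
  rw [affineCount, affineCount, hinsert, Finset.card_insert_of_notMem
    (by rw [mem_affineSupport, hiff]; simp)]

variable [Fintype F] [Finite E] {p q : ℕ} {c : E → F}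

theorem IsPlaneSectionCodeword.pointCount_sub_kerIndicator_top_add
    (hc : IsPlaneSectionCodeword q c) (hF : Fintype.card F = q ^ 2) {φ : Dual F E} (hφ0 : φ ≠ 0)
    (hφ : ∀ x, φ x = 0 → c x ≠ 0) :
    pointCount (c - kerIndicator φ) (⊤ : Submodule F E) + q ^ 2 = q ^ 3 := by
  classical
  obtain ⟨b, a, hba, hb, ha, hspan⟩ := exists_span_pair_eq_ker hc.finrank_eq hφ0
  have hb0 : b ≠ 0 := hba.ne_zero 0
  obtain ⟨x, hbax⟩ := exists_linearIndependent_triple hc.finrank_eq hba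
  have hx : φ x ≠ 0 := fun h =>
    (linearIndependent_triple_iff_notMem.1 hbax).2 (hspan.symm ▸ LinearMap.mem_ker.2 h)
  have hfull : affineCount c b a = Fintype.card F := by
    rw [affineCount, affineSupport, Finset.filter_true_of_mem fun z _ =>
      hφ (a + z • b) (by simp [ha, hb]), Finset.card_univ]
  have hplane := pointCount_sub_kerIndicator_add hc.mem hc.eq_zero_or_one hbax hb ha hx
  rw [pointCount_span_pair hc.mem hba, pointCount_span_singleton_of_ne_zero hc.mem hb0 (hφ b hb),
    span_triple_eq_top hc.finrank_eq hbax, hc.pointCount_top, hfull, hF] at hplane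
  lia

theorem IsPlaneSectionCodeword.affineCount_lt_of_forall_ker (hc : IsPlaneSectionCodeword q c)
    [CharP F p] (hp : p.Prime) (hpq : p ∣ q) (hq : 4 < q) (hF : Fintype.card F = q ^ 2)
    {φ : Dual F E} (hφ : ∀ x, φ x = 0 → c x ≠ 0) {x b : E} (hx : c x = 0)
    (hb : φ b = 0) (hb0 : b ≠ 0) : affineCount c x b < q := by
  have hφx : φ x ≠ 0 := fun h => hφ x h hx
  have hxb := linearIndependent_pair_of_apply_eq_zero hφx hb hb0
  have hx0 : x ≠ 0 := hxb.ne_zero 0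
  have hle : affineCount c x b ≤ q + 1 := by
    have hline := pointCount_span_pair hc.mem hxb
    have hcount : affineCount c x b ≤ Fintype.card F := Finset.card_le_univ _
    rw [pointCount_span_singleton_of_eq_zero hc.mem hx0 hx, zero_add] at hline
    exact hline ▸ hc.pointCount_le_of_lt hp hpq hq hF (finrank_span_pair hxb) (by lia)
  have hne : affineCount c x b ≠ q := fun h => hp.one_lt.ne' <| Nat.dvd_one.1 <| by
    have hdvd := dvd_sub (Int.natCast_dvd_natCast.2 hpq) (hc.dvd_affineCount_sub_one p hx b)
    rw [h, sub_sub_cancel] at hdvd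
    exact_mod_cast hdvd
  have hne' : affineCount c x b ≠ q + 1 := fun h => by
    obtain ⟨a, hxba⟩ := exists_linearIndependent_triple hc.finrank_eq hxb
    have hcount := affineCount_sub_kerIndicator_add_one hφx hb
      (hc.eq_one_of_ne_zero (hφ b hb))
    rw [h, Nat.add_right_cancel_iff] at hcount
    have hSW := affineCount_mul_add_le (sub_mem hc.mem (kerIndicator_mem_hyperplaneCode φ)) hxba
      (by rw [hcount, hF]; nlinarith)
    have hweight := hc.pointCount_sub_kerIndicator_top_add hF
      (show φ ≠ 0 by rintro rfl; simp at hφx) hφ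
    rw [span_triple_eq_top hc.finrank_eq hxba, hcount, hF] at hSW
    nlinarith
  lia

theorem IsPlaneSectionCodeword.pointCount_lt (hc : IsPlaneSectionCodeword q c)
    [CharP F p] (hp : p.Prime) (hpq : p ∣ q) (hq : 4 < q) (hF : Fintype.card F = q ^ 2)
    {φ : Dual F E} (hφ0 : φ ≠ 0) : pointCount c (LinearMap.ker φ) < q ^ 2 + 1 := by
  have hker := finrank_ker_of_ne_zero hc.finrank_eq hφ0
  by_contra! hge
  have hφ (x : E) (hx : φ x = 0) : c x ≠ 0 := by
    by_cases hx0 : x = 0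
    · rw [hx0, hc.apply_zero]
      exact one_ne_zero
    · exact apply_ne_zero_of_card_lt_pointCount hc.mem hker (by lia) (LinearMap.mem_ker.2 hx) hx0
  obtain ⟨x, hxker, hx⟩ := hc.exists_apply_eq_zero_notMem hq hF hker
  obtain ⟨u, v, huv, hu, hv, hspan⟩ := exists_span_pair_eq_ker hc.finrank_eq hφ0
  have hxuv : LinearIndependent F ![x, u, v] := by
    simpa using linearIndependent_triple_add_smul
      (linearIndependent_triple_iff_notMem.2 ⟨huv, hspan.symm ▸ hxker⟩) 0 0
  have hx0 : x ≠ 0 := hxuv.ne_zero 0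
  have hlines (b : E) (hb : φ b = 0) (hb0 : b ≠ 0) : affineCount c x b ≤ q - 1 :=
    Nat.le_pred_of_lt (hc.affineCount_lt_of_forall_ker hp hpq hq hF hφ hx hb hb0)
  have hplane := pointCount_span_triple hc.mem hxuv
  rw [span_triple_eq_top hc.finrank_eq hxuv, hc.pointCount_top,
    pointCount_span_pair hc.mem (linearIndependent_triple_iff_notMem.1 hxuv).1,
    pointCount_span_singleton_of_eq_zero hc.mem hx0 hx, zero_add] at hplane
  have hsum := Finset.sum_le_card_nsmul Finset.univ (fun t : F => affineCount c x (v + t • u))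
    (q - 1) fun t _ => hlines _ (by simp [hu, hv])
      (add_smul_ne_zero_of_linearIndependent huv t)
  have hfirst := hlines u hu (huv.ne_zero 0)
  rw [Finset.card_univ, hF, smul_eq_mul] at hsum
  obtain ⟨k, rfl⟩ := Nat.exists_eq_add_of_lt hq
  simp only [Nat.add_sub_cancel] at hsum hfirst
  nlinarith

end Unital

section UnitalOfPlaneSection
variable {F : Type*} [Field F] {E : Type*} [AddCommGroup E] [Module F E]

theorem exists_ker_eq {n : ℕ} (hE : finrank F E = n + 1) {L : Submodule F E}
    (hL : finrank F L = n) : ∃ φ : Dual F E, φ ≠ 0 ∧ LinearMap.ker φ = L := by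
  have : FiniteDimensional F E := FiniteDimensional.of_finrank_pos (by lia)
  have hlt : L < ⊤ := lt_top_iff_ne_top.2 fun h => by
    rw [h, finrank_top, hE] at hL
    lia
  obtain ⟨φ, hφ, hle⟩ := Submodule.exists_le_ker_of_lt_top L hlt
  exact ⟨φ, hφ, (Submodule.eq_of_le_of_finrank_eq hle
    (by rw [hL, finrank_ker_of_ne_zero hE hφ])).symm⟩

variable [Fintype F] [Finite E] {p q : ℕ} {c : E → F}

theorem IsConeCodeword.pointCount_pos (hc : IsConeCodeword c) {L : Submodule F E}
    (hL : finrank F L = 2) (hlt : pointCount c L < Fintype.card F + 1) : 0 < pointCount c L := by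
  obtain ⟨u, v, huv, rfl, hu⟩ := exists_span_pair_eq_of_pointCount_lt hc.mem hL hlt
  rw [pointCount_span_pair hc.mem huv]
  exact Nat.add_pos_right _ (hc.affineCount_pos hu v)

theorem sum_pointCount_ker_sub_mul_sub_eq_zero [Fintype (Dual F E)]
    [DecidableEq (Dual F E)] (hc : c ∈ hyperplaneCode F E) (hE : finrank F E = 3)
    (htop : pointCount c (⊤ : Submodule F E) = q ^ 3 + 1) (hF : Fintype.card F = q ^ 2) :
    ∑ φ ∈ ({0}ᶜ : Finset (Dual F E)), ((pointCount c (LinearMap.ker φ) : ℤ) - 1) *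
      (pointCount c (LinearMap.ker φ) - (q + 1)) = 0 := by
  classical
  have := Fintype.ofFinite E
  have hsum := sum_mul_pointCount_ker_sub_mul_sub (k := 1) hc (pointCount_bot)
    (by rw [hE, finrank_bot]) 1 1 (q + 1)
  have hpoint : ∑ x ∈ nonzeroSupport c, (pointCount c (⊥ ⊔ Submodule.span F {x}) : ℤ) =
      (q ^ 2 - 1) * (q ^ 3 + 1) := by
    have hcard := card_nonzeroSupport hc
    rw [htop, hF] at hcard
    rw [Finset.sum_congr rfl fun x hx => by
      rw [bot_sup_eq, pointCount_span_singleton_of_ne_zero hc (mem_nonzeroSupport.1 hx).1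
        (mem_nonzeroSupport.1 hx).2]]
    simp [hcard]
  simp only [bot_le, Finset.filter_true, one_mul, hpoint, htop, hF] at hsum
  rw [Fintype.sum_eq_add_sum_compl 0, LinearMap.ker_zero, htop] at hsum
  push_cast at hsum
  linear_combination hsum

theorem IsPlaneSectionCodeword.isUnitalCodeword (hc : IsPlaneSectionCodeword q c)
    [CharP F p] (hp : p.Prime) (hpq : p ∣ q) (hq : 4 < q) (hF : Fintype.card F = q ^ 2) :
    IsUnitalCodeword q c where
  toIsConeCodeword := hc.toIsConeCodeword
  finrank_eq := hc.finrank_eq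
  pointCount_top := hc.pointCount_top
  pointCount_eq_or {L} hL := by
    classical
    have : Finite (Dual F E) := DFunLike.finite _
    have := Fintype.ofFinite (Dual F E)
    have hterm (φ : Dual F E) (hφ : φ ∈ ({0}ᶜ : Finset (Dual F E))) :
        ((pointCount c (LinearMap.ker φ) : ℤ) - 1) *
          (pointCount c (LinearMap.ker φ) - (q + 1)) ≤ 0 := by
      have hφ0 : φ ≠ 0 := by simpa using hφ
      have hker := finrank_ker_of_ne_zero hc.finrank_eq hφ0
      have hlt := hc.pointCount_lt hp hpq hq hF hφ0
      have hpos := hc.pointCount_pos hker (hF.symm ▸ hlt)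
      have hle := hc.pointCount_le_of_lt hp hpq hq hF hker hlt
      exact mul_nonpos_of_nonneg_of_nonpos (by lia) (by lia)
    obtain ⟨φ, hφ0, rfl⟩ := exists_ker_eq hc.finrank_eq hL
    have hzero := (Finset.sum_eq_zero_iff_of_nonpos hterm).1
      (sum_pointCount_ker_sub_mul_sub_eq_zero hc.mem hc.finrank_eq hc.pointCount_top hF) φ
      (by simpa using hφ0)
    rcases mul_eq_zero.1 hzero with h | h
    · exact Or.inl (by lia)
    · exact Or.inr (by lia)

end UnitalOfPlaneSection

section PowerSum
variable {F : Type*} [Field F] [Fintype F] {E : Type*} [AddCommGroup E] [Module F E]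
  {c : E → F} {u w : E}

theorem powerSum_smul (hc : c ∈ hyperplaneCode F E) {t : F} (ht : t ≠ 0) (u w : E) (j : ℕ) :
    powerSum c u j (t • w) = t ^ j * powerSum c u j w := by
  rw [powerSum, powerSum, Finset.mul_sum, ← Equiv.sum_comp (Equiv.mulLeft₀ t ht)]
  refine Finset.sum_congr rfl fun z _ => ?_
  rw [Equiv.mulLeft₀_apply, mul_smul, ← smul_add, apply_smul_of_mem_hyperplaneCode hc ht, mul_pow,
    mul_assoc]

theorem powerSum_add_smul_eq_zero (hc : c ∈ hyperplaneCode F E) {j : ℕ}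
    (hj : j < Fintype.card F - 1) {v : E} {T : Finset F} (hT : j ≤ T.card)
    (hv : powerSum c u j v = 0) (hw : ∀ t ∈ T, powerSum c u j (w + t • v) = 0) (t : F) :
    powerSum c u j (w + t • v) = 0 := by
  obtain ⟨s, a, ψ, hψ⟩ := exists_powerSum_eq_sum_pow hc u
  have heval (t : F) : (linePolynomial s a ψ w v j).eval t = powerSum c u j (w + t • v) := by
    rw [eval_linePolynomial, hψ j hj]
  have hdeg : (linePolynomial s a ψ w v j).degree < T.card := by
    refine lt_of_lt_of_le ?_ (Nat.cast_le.2 hT)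
    refine (degree_lt_iff_coeff_zero _ _).2 fun m hm => ?_
    rcases hm.eq_or_lt with rfl | hlt
    · rw [coeff_linePolynomial, ← hψ j hj, hv]
    · exact coeff_eq_zero_of_natDegree_lt ((natDegree_linePolynomial_le ..).trans_lt hlt)
  rw [← heval, eq_zero_of_degree_lt_of_eval_finset_eq_zero T hdeg
    fun t ht => (heval t).trans (hw t ht), eval_zero]

namespace IsConeCodeword

theorem powerSum_eq_sum (hc : IsConeCodeword c) (u : E) (j : ℕ) (w : E) :
    powerSum c u j w = ∑ z ∈ affineSupport c u w, z ^ j := by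
  classical
  rw [powerSum, affineSupport, Finset.sum_filter]
  refine Finset.sum_congr rfl fun z _ => ?_
  rcases hc.eq_zero_or_one (w + z • u) with h | h <;> simp [h]

theorem affineSupport_eq_singleton_zero (hc : IsConeCodeword c) (hone : affineCount c u w = 1)
    (hw : powerSum c u 1 w = 0) : affineSupport c u w = {0} := by
  obtain ⟨z, hz⟩ := Finset.card_eq_one.1 hone
  rw [hc.powerSum_eq_sum, hz, Finset.sum_singleton, pow_one] at hw
  rw [hz, hw]

theorem exists_dual_eq_powerSum_one (hc : IsConeCodeword c) (hF : 2 < Fintype.card F)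
    (hu : c u = 0) : ∃ Λ : Dual F E, (∀ w, Λ w = powerSum c u 1 w) ∧ Λ u = -1 := by
  classical
  obtain ⟨s, a, ψ, hψ⟩ := exists_powerSum_eq_sum_pow hc.mem u
  have hΛ (w : E) : (∑ φ ∈ s, a φ • ψ φ) w = powerSum c u 1 w := by
    simp [hψ 1 (by lia)]
  refine ⟨∑ φ ∈ s, a φ • ψ φ, hΛ, ?_⟩
  have hline (z : F) : c (u + z • u) = if z = -1 then 1 else 0 := by
    split_ifs with hz
    · simp [hz, hc.apply_zero]
    · rw [show u + z • u = (1 + z) • u by module, apply_smul_of_mem_hyperplaneCode hc.mem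
        (fun h => hz (eq_neg_of_add_eq_zero_right h)), hu]
  simp [hΛ, powerSum, hline]

end IsConeCodeword

end PowerSum

section PolarLine
variable {F : Type*} [Field F] {E : Type*} [AddCommGroup E] [Module F E]

theorem linearIndependent_triple_of_apply_eq_zero {φ : Dual F E} {x a b : E} (hx : φ x ≠ 0)
    (ha : φ a = 0) (hb : φ b = 0) (hab : LinearIndependent F ![a, b]) :
    LinearIndependent F ![x, a, b] := by
  have hmem : x ∉ Submodule.span F {a, b} := fun h => hx <| LinearMap.mem_ker.1 <|
    Submodule.span_le.2 (Set.pair_subset (LinearMap.mem_ker.2 ha) (LinearMap.mem_ker.2 hb)) h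
  simpa using linearIndependent_triple_add_smul
    (linearIndependent_triple_iff_notMem.2 ⟨hab, hmem⟩) 0 0

variable [Fintype F] [Finite E] {q : ℕ} {c : E → F} {u w : E}

namespace IsUnitalCodeword

theorem affineCount_eq_or (hc : IsUnitalCodeword q c) (hu : c u = 0)
    (huw : LinearIndependent F ![u, w]) : affineCount c u w = 1 ∨ affineCount c u w = q + 1 := by
  have hline := pointCount_span_pair hc.mem huw
  have hu0 : u ≠ 0 := huw.ne_zero 0
  rw [pointCount_span_singleton_of_eq_zero hc.mem hu0 hu, zero_add] at hline
  exact hline ▸ hc.pointCount_eq_or (finrank_span_pair huw)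

theorem affineCount_add_sum_affineCount (hc : IsUnitalCodeword q c) (hu : c u = 0) {v : E}
    (huvw : LinearIndependent F ![u, v, w]) :
    affineCount c u v + ∑ t : F, affineCount c u (w + t • v) = q ^ 3 + 1 := by
  have huv := (linearIndependent_triple_iff_notMem.1 huvw).1
  have hu0 : u ≠ 0 := huv.ne_zero 0
  rw [← hc.pointCount_top, ← span_triple_eq_top hc.finrank_eq huvw,
    pointCount_span_triple hc.mem huvw, pointCount_span_pair hc.mem huv,
    pointCount_span_singleton_of_eq_zero hc.mem hu0 hu, zero_add]

theorem exists_polar_basis (hc : IsUnitalCodeword q c) (hq : 1 < q)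
    (hF : Fintype.card F = q ^ 2) (hu : c u = 0) :
    ∃ v w, LinearIndependent F ![u, v, w] ∧ affineCount c u v = 1 ∧
      ∀ x, powerSum c u 1 x = 0 ↔ x ∈ Submodule.span F {v, w} := by
  obtain ⟨Λ, hΛ, hΛu⟩ := hc.exists_dual_eq_powerSum_one (by rw [hF]; nlinarith) hu
  have hΛu0 : Λ u ≠ 0 := by rw [hΛu]; exact neg_ne_zero.2 one_ne_zero
  have hΛ0 : Λ ≠ 0 := by rintro rfl; simp at hΛu0
  obtain ⟨v, hv, hv0, hone⟩ : ∃ v, Λ v = 0 ∧ v ≠ 0 ∧ affineCount c u v = 1 := by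
    by_contra! hne
    have hall (x : E) (hx : Λ x = 0) (hx0 : x ≠ 0) : affineCount c u x = q + 1 :=
      (hc.affineCount_eq_or hu (linearIndependent_pair_of_apply_eq_zero hΛu0 hx hx0)).resolve_left
        (hne x hx hx0)
    obtain ⟨a, b, hab, ha, hb, -⟩ := exists_span_pair_eq_ker hc.finrank_eq hΛ0
    have huab := linearIndependent_triple_of_apply_eq_zero hΛu0 ha hb hab
    have hsum := hc.affineCount_add_sum_affineCount hu huab
    rw [hall a ha (hab.ne_zero 0), Finset.sum_congr rfl fun t _ =>
      hall (b + t • a) (by simp [ha, hb]) (add_smul_ne_zero_of_linearIndependent hab t)] at hsum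
    simp only [Finset.sum_const, Finset.card_univ, hF, smul_eq_mul] at hsum
    nlinarith
  obtain ⟨w, hvw, hspan⟩ := exists_span_pair_eq (finrank_ker_of_ne_zero hc.finrank_eq hΛ0)
    (LinearMap.mem_ker.2 hv) hv0
  have hw : Λ w = 0 := LinearMap.mem_ker.1 (hspan ▸ Submodule.subset_span (by simp))
  exact ⟨v, w, linearIndependent_triple_of_apply_eq_zero hΛu0 hv hw hvw, hone, fun x => by
    rw [hspan, LinearMap.mem_ker, hΛ]⟩

theorem card_filter_affineCount_eq_one (hc : IsUnitalCodeword q c) (hq : q ≠ 0)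
    (hF : Fintype.card F = q ^ 2) (hu : c u = 0) {v : E} (huvw : LinearIndependent F ![u, v, w])
    (hv : affineCount c u v = 1) :
    (Finset.univ.filter fun t : F => affineCount c u (w + t • v) = 1).card = q := by
  have hcount (t : F) :
      affineCount c u (w + t • v) + q * (if affineCount c u (w + t • v) = 1 then 1 else 0) =
        q + 1 := by
    have hli : LinearIndependent F ![u, w + t • v] := by
      rw [LinearIndependent.pair_symm_iff]
      simpa using (linearIndependent_triple_iff_notMem.1
        (linearIndependent_triple_add_smul huvw t 0)).1
    rcases hc.affineCount_eq_or hu hli with h | h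
    · simp [h, add_comm]
    · simp [h, hq]
  have hsum := Finset.sum_congr rfl fun t (_ : t ∈ (Finset.univ : Finset F)) => hcount t
  have hplane := hc.affineCount_add_sum_affineCount hu huvw
  rw [Finset.sum_add_distrib, ← Finset.mul_sum, Finset.sum_boole, Nat.cast_id, Finset.sum_const,
    Finset.card_univ, hF, smul_eq_mul] at hsum
  rw [hv] at hplane
  exact Nat.eq_of_mul_eq_mul_left (Nat.pos_of_ne_zero hq) (by lia)

theorem powerSum_eq_zero (hc : IsUnitalCodeword q c) (hq : 1 < q) (hF : Fintype.card F = q ^ 2)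
    (hu : c u = 0) (hw : powerSum c u 1 w = 0) {j : ℕ} (hj : 1 ≤ j) (hjq : j ≤ q) :
    powerSum c u j w = 0 := by
  have hq2 : 2 * q ≤ q ^ 2 := by nlinarith
  obtain ⟨v, v', huvv', hv, hpolar⟩ := hc.exists_polar_basis hq hF hu
  have htangent (x : E) (hx : x ∈ Submodule.span F {v, v'}) (hone : affineCount c u x = 1) :
      powerSum c u j x = 0 := by
    rw [hc.powerSum_eq_sum, hc.affineSupport_eq_singleton_zero hone ((hpolar x).2 hx),
      Finset.sum_singleton, zero_pow (by lia)]
  have hv0 : powerSum c u j v = 0 := htangent v (Submodule.subset_span (by simp)) hv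
  have hvan : ∀ t : F, powerSum c u j (v' + t • v) = 0 :=
    powerSum_add_smul_eq_zero hc.mem (by rw [hF]; lia)
      (hjq.trans_eq (hc.card_filter_affineCount_eq_one (by lia) hF hu huvv' hv).symm) hv0
      fun t ht => htangent _ (Submodule.mem_span_pair.2 ⟨t, 1, by module⟩)
        (Finset.mem_filter.1 ht).2
  obtain ⟨x, y, rfl⟩ := Submodule.mem_span_pair.1 ((hpolar w).1 hw)
  by_cases hy : y = 0
  · by_cases hx : x = 0
    · exact htangent _ (by simp [hx, hy]) (by simp [affineCount, hx, hy, hc.affineSupport_zero hu])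
    · rw [hy, zero_smul, add_zero, powerSum_smul hc.mem hx, hv0, mul_zero]
  · have hxy : x • v + y • v' = y • (v' + (y⁻¹ * x) • v) := by
      rw [smul_add, smul_smul, mul_inv_cancel_left₀ hy, add_comm]
    rw [hxy, powerSum_smul hc.mem hy, hvan, mul_zero]

end IsUnitalCodeword

end PolarLine

section NormFibre

theorem eq_zero_of_sum_mul_pow_eq_zero {ι R : Type*} [CommRing R] [IsDomain R] {s : Finset ι}
    {f v : ι → R} (hf : Set.InjOn f s) (h : ∀ l < s.card, ∑ i ∈ s, v i * f i ^ l = 0) :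
    ∀ i ∈ s, v i = 0 := by
  have hsum (l : Fin s.card) :
      ∑ i, v (s.equivFin.symm i) * f (s.equivFin.symm i) ^ (l : ℕ) = 0 := by
    rw [Equiv.sum_comp s.equivFin.symm fun i : s => v i * f i ^ (l : ℕ),
      s.sum_coe_sort fun i => v i * f i ^ (l : ℕ), h l l.2]
  have hzero := Matrix.eq_zero_of_forall_pow_sum_mul_pow_eq_zero
    (f := fun i => f (s.equivFin.symm i)) (v := fun i => v (s.equivFin.symm i))
    (fun i j hij => s.equivFin.symm.injective
      (Subtype.ext (hf (Subtype.prop _) (Subtype.prop _) hij))) hsum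
  intro i hi
  simpa using congrFun hzero (s.equivFin ⟨i, hi⟩)

theorem zero_notMem_of_sum_pow_eq_zero {R : Type*} [CommRing R] [IsDomain R] {s : Finset R} {n : ℕ}
    (hn : 0 < n) (hs : s.card = n + 1) (h : ∀ j, 1 ≤ j → j ≤ n → ∑ z ∈ s, z ^ j = 0) :
    (0 : R) ∉ s := by
  classical
  intro hmem
  have hcard : (s.erase 0).card = n := by rw [Finset.card_erase_of_mem hmem, hs, Nat.add_sub_cancel]
  have hzero : ∀ z ∈ s.erase 0, z = 0 :=
    eq_zero_of_sum_mul_pow_eq_zero (f := id) Function.injective_id.injOn fun l hl => by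
      have hsum := h (l + 1) (by lia) (by lia)
      rw [← Finset.add_sum_erase s _ hmem, zero_pow (by lia), zero_add] at hsum
      simpa only [id_eq, ← pow_succ'] using hsum
  obtain ⟨z, hz⟩ := Finset.card_pos.1 (hcard ▸ hn)
  exact Finset.ne_of_mem_erase hz (hzero z hz)

theorem sum_pow_eq_pow_of_sum_sub_pow_eq_zero {ι R : Type*} [CommRing R] {s : Finset ι} {y : ι → R}
    {κ : R} {l : ℕ} (hs : (s.card : R) = 1)
    (h : ∀ j, 1 ≤ j → j ≤ l → ∑ i ∈ s, (y i - κ) ^ j = 0) : ∑ i ∈ s, y i ^ l = κ ^ l := by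
  have hbinom (i : ι) : y i ^ l =
      ∑ j ∈ Finset.range (l + 1), (y i - κ) ^ j * (κ ^ (l - j) * l.choose j) := by
    simp only [← mul_assoc, ← add_pow, sub_add_cancel]
  simp only [hbinom]
  rw [Finset.sum_comm, Finset.sum_eq_single_of_mem 0 (by simp)]
  · simp [hs]
  · intro j hj hj0
    rw [← Finset.sum_mul, h j (Nat.one_le_iff_ne_zero.2 hj0)
      (Nat.lt_succ_iff.1 (Finset.mem_range.1 hj)), zero_mul]

theorem eq_zero_of_card_lt_of_quadratic_eq_zero {R : Type*} [CommRing R] [IsDomain R]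
    {s : Finset R} (hs : 2 < s.card) {a b d : R} (h : ∀ z ∈ s, a * z ^ 2 + b * z + d = 0) :
    a = 0 ∧ b = 0 ∧ d = 0 := by
  have hzero := eq_zero_of_natDegree_lt_card_of_eval_eq_zero' (C a * X ^ 2 + C b * X + C d) s
    (fun z hz => by simpa using h z hz) (natDegree_quadratic_le.trans_lt hs)
  refine ⟨?_, ?_, ?_⟩
  · simpa [coeff_X, coeff_C] using congrArg (coeff · 2) hzero
  · simpa [coeff_X, coeff_C] using congrArg (coeff · 1) hzero
  · simpa [coeff_X, coeff_C] using congrArg (coeff · 0) hzero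

theorem card_filter_pow_eq_le {R : Type*} [CommRing R] [IsDomain R] [Fintype R] [DecidableEq R]
    {n : ℕ} (hn : 0 < n) (a : R) : (Finset.univ.filter fun z : R => z ^ n = a).card ≤ n := by
  refine le_trans (Finset.card_le_card fun z hz => ?_)
    ((Multiset.toFinset_card_le _).trans (card_nthRoots n a))
  rw [Multiset.mem_toFinset, mem_nthRoots hn]
  exact (Finset.mem_filter.1 hz).2

variable {F : Type*} [Field F] {p h q : ℕ} {s : Finset F} {κ : F}

theorem exists_mul_pow_succ_eq_one_sub_mul (hs : s.card = q + 1) (hqF : (q : F) = 0)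
    (h0 : (0 : F) ∉ s) (hpow : ∀ j, 1 ≤ j → j ≤ q → ∑ z ∈ s, z ^ j = 0)
    (hinv : ∀ j, 1 ≤ j → j ≤ q → ∑ z ∈ s, (z⁻¹ - κ) ^ j = 0) :
    ∃ D : F, ∀ z ∈ s, D * z ^ (q + 1) = 1 - κ * z := by
  have hne (z : F) (hz : z ∈ s) : z ≠ 0 := fun hz0 => h0 (hz0 ▸ hz)
  have hcard : (s.card : F) = 1 := by simp [hs, hqF]
  have hmoment (l : ℕ) (hl : l ≤ q) : ∑ z ∈ s, z⁻¹ ^ l = κ ^ l :=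
    sum_pow_eq_pow_of_sum_sub_pow_eq_zero hcard fun j hj hjl => hinv j hj (hjl.trans hl)
  refine ⟨∑ z ∈ s, z⁻¹ ^ (q + 1) - κ ^ (q + 1), fun z hz => ?_⟩
  set D := ∑ z ∈ s, z⁻¹ ^ (q + 1) - κ ^ (q + 1) with hD
  have horth (l : ℕ) (hl : l < s.card) : ∑ z ∈ s, (D * z ^ q - (z⁻¹ - κ)) * z⁻¹ ^ l = 0 := by
    have hlq : l ≤ q := by lia
    have hexpand : ∑ z ∈ s, (D * z ^ q - (z⁻¹ - κ)) * z⁻¹ ^ l =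
        D * ∑ z ∈ s, z ^ (q - l) - ∑ z ∈ s, z⁻¹ ^ (l + 1) + κ * ∑ z ∈ s, z⁻¹ ^ l := by
      simp only [Finset.mul_sum, ← Finset.sum_sub_distrib, ← Finset.sum_add_distrib]
      refine Finset.sum_congr rfl fun z hz => ?_
      rw [pow_sub₀ z (hne z hz) hlq, inv_pow]
      ring
    rw [hexpand, hmoment l hlq]
    rcases hlq.lt_or_eq with hlt | rfl
    · rw [hpow (q - l) (by lia) (by lia), hmoment (l + 1) hlt]
      ring
    · simp only [Nat.sub_self, pow_zero, Finset.sum_const, nsmul_one, hcard, hD]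
      ring
  have hzero := eq_zero_of_sum_mul_pow_eq_zero (inv_injective.injOn) horth z hz
  have hz0 := hne z hz
  calc D * z ^ (q + 1) = (z⁻¹ - κ) * z := by rw [← sub_eq_zero.1 hzero]; ring
    _ = 1 - κ * z := by rw [sub_mul, inv_mul_cancel₀ hz0]

variable [Fintype F] [CharP F p]

theorem pow_pow_eq_self_of_card_eq_sq (hF : Fintype.card F = q ^ 2) (z : F) : (z ^ q) ^ q = z := by
  rw [← pow_mul, ← sq, ← hF, FiniteField.pow_card]

/-- Raising `D z ^ (q + 1) = 1 - κ z` to the power `q` and eliminating `z ^ q` leaves a quadratic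
equation in `z`. -/
theorem eq_zero_and_pow_eq_self_of_mul_pow_succ_eq (hp : p.Prime) (hq : q = p ^ h) (hq1 : 1 < q)
    (hF : Fintype.card F = q ^ 2) (hs : 2 < s.card) {D : F}
    (hD : ∀ z ∈ s, D * z ^ (q + 1) = 1 - κ * z) : κ = 0 ∧ D ^ q = D := by
  have := Fact.mk hp
  have hquad (z : F) (hz : z ∈ s) :
      -(D ^ q * κ) * z ^ 2 + (D ^ q - D - κ ^ (q + 1)) * z + κ ^ q = 0 := by
    have hfrob : D ^ q * (z * z ^ q) = 1 - κ ^ q * z ^ q := by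
      calc D ^ q * (z * z ^ q) = (D * z ^ (q + 1)) ^ q := by
            rw [pow_succ, mul_pow, mul_pow, pow_pow_eq_self_of_card_eq_sq hF]
        _ = 1 - κ ^ q * z ^ q := by
            rw [hD z hz, hq, sub_pow_char_pow, one_pow, mul_pow]
    have hz := hD z hz
    rw [pow_succ] at hz
    linear_combination (D * z) * hfrob - (D ^ q * z + κ ^ q) * hz
  obtain ⟨-, hlin, hconst⟩ := eq_zero_of_card_lt_of_quadratic_eq_zero hs hquad
  have hκ : κ = 0 := (pow_eq_zero_iff (by lia)).1 hconst
  rw [hκ, zero_pow (by lia), sub_zero] at hlin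
  exact ⟨hκ, sub_eq_zero.1 hlin⟩

theorem exists_pow_eq_self_and_forall_pow_succ_eq (hp : p.Prime) (hq : q = p ^ h) (hq1 : 1 < q)
    (hF : Fintype.card F = q ^ 2) (hs : s.card = q + 1) (h0 : (0 : F) ∉ s)
    (hpow : ∀ j, 1 ≤ j → j ≤ q → ∑ z ∈ s, z ^ j = 0)
    (hinv : ∀ j, 1 ≤ j → j ≤ q → ∑ z ∈ s, (z⁻¹ - κ) ^ j = 0) :
    ∃ a : F, a ^ q = a ∧ ∀ z ∈ s, z ^ (q + 1) = a := by
  have hh : h ≠ 0 := by rintro rfl; simp [hq] at hq1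
  have hqF : (q : F) = 0 := by rw [hq, Nat.cast_pow, CharP.cast_eq_zero, zero_pow hh]
  obtain ⟨D, hD⟩ := exists_mul_pow_succ_eq_one_sub_mul hs hqF h0 hpow hinv
  obtain ⟨rfl, hDq⟩ := eq_zero_and_pow_eq_self_of_mul_pow_succ_eq hp hq hq1 hF (by lia) hD
  refine ⟨D⁻¹, by rw [inv_pow, hDq], fun z hz => eq_inv_of_mul_eq_one_right ?_⟩
  rw [hD z hz, zero_mul, sub_zero]

end NormFibre

section Conic
variable {F : Type*} [Field F] [Fintype F] {E : Type*} [AddCommGroup E] [Module F E]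
  {c : E → F} {u w : E}

theorem IsConeCodeword.powerSum_add_smul_eq_sum_inv_sub (hc : IsConeCodeword c) (hu : c u = 0)
    (hw : c w = 0) (κ : F) (j : ℕ) :
    powerSum c w j (u + κ • w) = ∑ z ∈ affineSupport c u w, (z⁻¹ - κ) ^ j := by
  have hswap {z : F} (hz : z ≠ 0) : c (u + z⁻¹ • w) = c (w + z • u) := by
    rw [← apply_smul_of_mem_hyperplaneCode hc.mem hz, smul_add, smul_inv_smul₀ hz, add_comm]
  have hne {z : F} (hz : c (w + z • u) ≠ 0) : z ≠ 0 := by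
    rintro rfl
    exact hz (by rw [zero_smul, add_zero, hw])
  have hne' {y : F} (hy : c (u + κ • w + y • w) ≠ 0) : κ + y ≠ 0 := fun h =>
    hy (by rw [add_assoc, ← add_smul, h, zero_smul, add_zero, hu])
  rw [hc.powerSum_eq_sum]
  refine Finset.sum_nbij' (fun y => (κ + y)⁻¹) (fun z => z⁻¹ - κ) (fun y hy => ?_)
    (fun z hz => ?_) (fun y _ => by simp) (fun z _ => by simp) (fun y _ => by simp)
  · rw [mem_affineSupport] at hy ⊢
    rwa [← hswap (inv_ne_zero (hne' hy)), inv_inv, add_smul, ← add_assoc]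
  · rw [mem_affineSupport] at hz ⊢
    rwa [add_assoc, ← add_smul, add_sub_cancel, hswap (hne hz)]

namespace IsUnitalCodeword
variable [Finite E] {p h q : ℕ} [CharP F p]

theorem exists_forall_apply_ne_zero_iff_of_secant (hc : IsUnitalCodeword q c) (hp : p.Prime)
    (hq : q = p ^ h) (hq1 : 1 < q) (hF : Fintype.card F = q ^ 2) (hu : c u = 0)
    (hw : powerSum c u 1 w = 0) (hsec : affineCount c u w = q + 1) :
    ∃ a : F, a ^ q = a ∧ ∀ z, c (w + z • u) ≠ 0 ↔ z ^ (q + 1) = a := by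
  classical
  have hpow (j : ℕ) (hj : 1 ≤ j) (hjq : j ≤ q) : ∑ z ∈ affineSupport c u w, z ^ j = 0 := by
    rw [← hc.powerSum_eq_sum, hc.powerSum_eq_zero hq1 hF hu hw hj hjq]
  have h0 : 0 ∉ affineSupport c u w := zero_notMem_of_sum_pow_eq_zero (by lia) hsec hpow
  have hcw : c w = 0 := by
    rwa [mem_affineSupport, zero_smul, add_zero, not_not] at h0
  obtain ⟨Λ, hΛ, hΛw⟩ := hc.exists_dual_eq_powerSum_one (by rw [hF]; nlinarith) hcw
  have hpolar : powerSum c w 1 (u + Λ u • w) = 0 := by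
    rw [← hΛ, map_add, map_smul, hΛw, smul_eq_mul, mul_neg_one, add_neg_cancel]
  obtain ⟨a, ha, hnorm⟩ := exists_pow_eq_self_and_forall_pow_succ_eq (κ := Λ u) hp hq hq1 hF hsec
    h0 hpow fun j hj hjq => by
      rw [← hc.powerSum_add_smul_eq_sum_inv_sub hu hcw,
        hc.powerSum_eq_zero hq1 hF hcw hpolar hj hjq]
  have hsupport : affineSupport c u w = Finset.univ.filter fun z : F => z ^ (q + 1) = a :=
    Finset.eq_of_subset_of_card_le (fun z hz => by simp [hnorm z hz])
      ((card_filter_pow_eq_le q.succ_pos a).trans_eq hsec.symm)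
  exact ⟨a, ha, fun z => by rw [← mem_affineSupport, hsupport]; simp⟩

theorem exists_forall_apply_ne_zero_iff (hc : IsUnitalCodeword q c) (hp : p.Prime)
    (hq : q = p ^ h) (hq1 : 1 < q) (hF : Fintype.card F = q ^ 2) (hu : c u = 0)
    (hw : powerSum c u 1 w = 0) :
    ∃ a : F, a ^ q = a ∧ ∀ z, c (w + z • u) ≠ 0 ↔ z ^ (q + 1) = a := by
  have hsingleton (h0 : affineSupport c u w = {0}) :
      ∃ a : F, a ^ q = a ∧ ∀ z, c (w + z • u) ≠ 0 ↔ z ^ (q + 1) = a :=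
    ⟨0, zero_pow (by lia), fun z => by rw [← mem_affineSupport, h0]; simp⟩
  by_cases hw0 : w = 0
  · exact hsingleton (hw0 ▸ hc.affineSupport_zero hu)
  obtain ⟨Λ, hΛ, hΛu⟩ := hc.exists_dual_eq_powerSum_one (by rw [hF]; nlinarith) hu
  have huw : LinearIndependent F ![u, w] :=
    linearIndependent_pair_of_apply_eq_zero (φ := Λ) (by simp [hΛu]) ((hΛ w).trans hw) hw0
  rcases hc.affineCount_eq_or hu huw with hone | hsec
  · exact hsingleton (hc.affineSupport_eq_singleton_zero hone hw)
  · exact hc.exists_forall_apply_ne_zero_iff_of_secant hp hq hq1 hF hu hw hsec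

theorem powerSum_pow_eq_self_and_apply_ne_zero_iff (hc : IsUnitalCodeword q c) (hp : p.Prime)
    (hq : q = p ^ h) (hq1 : 1 < q) (hF : Fintype.card F = q ^ 2) (hu : c u = 0)
    (hw : powerSum c u 1 w = 0) :
    powerSum c u (q + 1) w ^ q = powerSum c u (q + 1) w ∧
      ∀ z, c (w + z • u) ≠ 0 ↔ z ^ (q + 1) = powerSum c u (q + 1) w := by
  obtain ⟨a, ha, hnorm⟩ := hc.exists_forall_apply_ne_zero_iff hp hq hq1 hF hu hw
  have hsum : powerSum c u (q + 1) w = a := by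
    have hcard : (affineCount c u w : F) = 1 := by
      rw [hc.cast_affineCount, ← hc.apply_zero, ← sum_add_smul_add_apply_of_mem_hyperplaneCode
        hc.mem u w, hu, add_zero]
    rw [hc.powerSum_eq_sum, Finset.sum_congr rfl fun z hz => (hnorm z).1 (mem_affineSupport.1 hz),
      Finset.sum_const, nsmul_eq_mul, ← affineCount, hcard, one_mul]
  exact hsum ▸ ⟨ha, hnorm⟩

end IsUnitalCodeword

end Conic

section HermitianForm
variable {F : Type*} [Field F] [Fintype F] {p h q : ℕ} [CharP F p]

theorem eq_pow_of_forall_hermitian_form_pow_eq (hp : p.Prime) (hq : q = p ^ h) (hq1 : 1 < q)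
    (hF : Fintype.card F = q ^ 2) {a b b' d : F}
    (hfix : ∀ x y : F,
      (a * x ^ (q + 1) + b * (x * y ^ q) + b' * (y * x ^ q) + d * y ^ (q + 1)) ^ q =
        a * x ^ (q + 1) + b * (x * y ^ q) + b' * (y * x ^ q) + d * y ^ (q + 1)) :
    d ^ q = d ∧ b = b' ^ q := by
  classical
  have := Fact.mk hp
  have hadd (x y : F) : (x + y) ^ q = x ^ q + y ^ q := by rw [hq, add_pow_char_pow]
  have hqq := pow_pow_eq_self_of_card_eq_sq (F := F) hF
  have ha : a ^ q = a := by simpa [show q ≠ 0 by lia] using hfix 1 0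
  have hd : d ^ q = d := by simpa [show q ≠ 0 by lia] using hfix 0 1
  have hroot (x : F) : (b ^ q - b') * x ^ q + (b' ^ q - b) * x = 0 := by
    have hx := hfix x 1
    simp only [hadd, mul_pow, pow_succ, hqq, one_pow, mul_one, one_mul, ha, hd] at hx
    linear_combination hx
  have hdeg : (C (b ^ q - b') * X ^ q + C (b' ^ q - b) * X).natDegree < Fintype.card F := by
    have : (C (b ^ q - b') * X ^ q + C (b' ^ q - b) * X).natDegree ≤ q := by
      compute_degree
      exact max_le le_rfl hq1.le
    rw [hF]
    nlinarith
  have hzero := eq_zero_of_natDegree_lt_card_of_eval_eq_zero' _ Finset.univ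
    (fun x _ => by simpa using hroot x) hdeg
  have hcoeff := congrArg (coeff · 1) hzero
  simp only [coeff_add, coeff_C_mul, coeff_X_pow, coeff_X_one, hq1.ne, if_false, mul_zero, mul_one,
    zero_add, coeff_zero] at hcoeff
  exact ⟨hd, (sub_eq_zero.1 hcoeff).symm⟩

variable {E : Type*} [AddCommGroup E] [Module F E] {c : E → F} {u : E}

theorem exists_powerSum_smul_add_smul_eq (hc : c ∈ hyperplaneCode F E) (hp : p.Prime)
    (hq : q = p ^ h) (hqF : q + 1 < Fintype.card F - 1) (u v w : E) :
    ∃ a b b' d : F, ∀ x y : F, powerSum c u (q + 1) (x • v + y • w) =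
      a * x ^ (q + 1) + b * (x * y ^ q) + b' * (y * x ^ q) + d * y ^ (q + 1) := by
  have := Fact.mk hp
  obtain ⟨s, a, ψ, hψ⟩ := exists_powerSum_eq_sum_pow hc u
  refine ⟨∑ φ ∈ s, a φ * ψ φ v ^ (q + 1), ∑ φ ∈ s, a φ * (ψ φ v * ψ φ w ^ q),
    ∑ φ ∈ s, a φ * (ψ φ w * ψ φ v ^ q), ∑ φ ∈ s, a φ * ψ φ w ^ (q + 1), fun x y => ?_⟩
  rw [hψ _ hqF]
  simp only [Finset.sum_mul, ← Finset.sum_add_distrib]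
  refine Finset.sum_congr rfl fun φ _ => ?_
  have hadd (x y : F) : (x + y) ^ q = x ^ q + y ^ q := by rw [hq, add_pow_char_pow]
  simp only [map_add, map_smul, smul_eq_mul, pow_succ, hadd, mul_pow]
  ring

namespace IsUnitalCodeword
variable [Finite E]

theorem affineCount_eq_one_iff (hc : IsUnitalCodeword q c) (hp : p.Prime) (hq : q = p ^ h)
    (hq1 : 1 < q) (hF : Fintype.card F = q ^ 2) (hu : c u = 0) {w : E}
    (hw : powerSum c u 1 w = 0) : affineCount c u w = 1 ↔ powerSum c u (q + 1) w = 0 := by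
  constructor <;> intro h1
  · rw [hc.powerSum_eq_sum, hc.affineSupport_eq_singleton_zero h1 hw, Finset.sum_singleton,
      zero_pow q.succ_ne_zero]
  · have hnorm := (hc.powerSum_pow_eq_self_and_apply_ne_zero_iff hp hq hq1 hF hu hw).2
    refine Finset.card_eq_one.2 ⟨0, Finset.ext fun z => ?_⟩
    rw [mem_affineSupport, hnorm, h1, Finset.mem_singleton, pow_eq_zero_iff q.succ_ne_zero]

theorem exists_powerSum_eq_hermitian_form (hc : IsUnitalCodeword q c) (hp : p.Prime)
    (hq : q = p ^ h) (hq2 : 2 < q) (hF : Fintype.card F = q ^ 2) (hu : c u = 0) :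
    ∃ (v w : E) (b d : F), LinearIndependent F ![u, v, w] ∧ b ≠ 0 ∧ d ^ q = d ∧ ∀ x y : F,
      powerSum c u 1 (x • v + y • w) = 0 ∧ powerSum c u (q + 1) (x • v + y • w) =
        b ^ q * (x * y ^ q) + b * (y * x ^ q) + d * y ^ (q + 1) := by
  have hq1 : 1 < q := by lia
  obtain ⟨v, w, huvw, hv, hpolar⟩ := hc.exists_polar_basis hq1 hF hu
  have hpow1 (x y : F) : powerSum c u 1 (x • v + y • w) = 0 :=
    (hpolar _).2 (Submodule.mem_span_pair.2 ⟨x, y, rfl⟩)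
  obtain ⟨a, b', b, d, hform⟩ := exists_powerSum_smul_add_smul_eq hc.mem hp hq
    (by rw [hF]; have : 3 * q ≤ q ^ 2 := by nlinarith
        lia) u v w
  obtain ⟨hd, rfl⟩ := eq_pow_of_forall_hermitian_form_pow_eq hp hq hq1 hF fun x y => by
    rw [← hform]
    exact (hc.powerSum_pow_eq_self_and_apply_ne_zero_iff hp hq hq1 hF hu (hpow1 x y)).1
  have htangent (x y : F) : affineCount c u (x • v + y • w) = 1 ↔
      a * x ^ (q + 1) + b ^ q * (x * y ^ q) + b * (y * x ^ q) + d * y ^ (q + 1) = 0 := by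
    rw [← hform, hc.affineCount_eq_one_iff hp hq hq1 hF hu (hpow1 x y)]
  have ha : a = 0 := by
    simpa [hv, show q ≠ 0 by lia] using htangent 1 0
  subst ha
  refine ⟨v, w, b, d, huvw, ?_, hd, fun x y => ⟨hpow1 x y, by rw [hform, zero_mul, zero_add]⟩⟩
  rintro rfl
  have hcount := hc.card_filter_affineCount_eq_one (by lia) hF hu huvw hv
  have hconst (t : F) : affineCount c u (w + t • v) = 1 ↔ d = 0 := by
    simpa [add_comm, show q ≠ 0 by lia] using htangent t 1
  by_cases hd0 : d = 0
  · rw [Finset.filter_true_of_mem fun t _ => (hconst t).2 hd0, Finset.card_univ, hF] at hcount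
    nlinarith
  · rw [Finset.filter_false_of_mem fun t _ => mt (hconst t).1 hd0, Finset.card_empty] at hcount
    lia

theorem exists_apply_eq_zero (hc : IsUnitalCodeword q c) (hq : 1 < q)
    (hF : Fintype.card F = q ^ 2) : ∃ u, c u = 0 := by
  have := nontrivial_of_finrank_pos (R := F) (M := E) (by rw [hc.finrank_eq]; lia)
  obtain ⟨φ, hφ⟩ := exists_ne (0 : Dual F E)
  have hline := finrank_ker_of_ne_zero hc.finrank_eq hφ
  have hlt : pointCount c (LinearMap.ker φ) < Fintype.card F + 1 := by
    rw [hF]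
    rcases hc.pointCount_eq_or hline with h1 | h1 <;> rw [h1] <;> nlinarith
  obtain ⟨u, -, -, -, hu⟩ := exists_span_pair_eq_of_pointCount_lt hc.mem hline hlt
  exact ⟨u, hu⟩

theorem exists_hermitian_matrix (hc : IsUnitalCodeword q c) (hp : p.Prime) (hq : q = p ^ h)
    (hq2 : 2 < q) (hF : Fintype.card F = q ^ 2) :
    ∃ B : Basis (Fin 3) F E, ∃ A : Matrix (Fin 3) (Fin 3) F, IsUnit A.det ∧
      Aᵀ = A.map (fun a => a ^ q) ∧
      ∀ y : Fin 3 → F, c (∑ i, y i • B i) ≠ 0 ↔ ∑ i, ∑ j, y i * A i j * y j ^ q = 0 := by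
  obtain ⟨u, hu⟩ := hc.exists_apply_eq_zero (by lia) hF
  have := Fact.mk hp
  obtain ⟨v, w, b, d, huvw, hb, hd, hform⟩ := hc.exists_powerSum_eq_hermitian_form hp hq hq2 hF hu
  let B := basisOfLinearIndependentOfCardEqFinrank huvw (by simp [hc.finrank_eq])
  have hneg (x : F) : (-x) ^ q = -x ^ q := by
    rw [← zero_sub, hq, sub_pow_char_pow, ← hq, zero_pow (by lia), zero_sub]
  refine ⟨B, !![1, 0, 0; 0, 0, -b ^ q; 0, -b, -d], ?_, ?_, fun y => ?_⟩
  · simp [Matrix.det_fin_three, hb]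
  · ext i j
    fin_cases i <;> fin_cases j <;>
      simp [hneg, hd, pow_pow_eq_self_of_card_eq_sq hF, show q ≠ 0 by lia]
  · have hnorm := (hc.powerSum_pow_eq_self_and_apply_ne_zero_iff hp hq (by lia) hF hu
      (hform (y 1) (y 2)).1).2 (y 0)
    have hvec : ∑ i, y i • B i = y 1 • v + y 2 • w + y 0 • u := by
      rw [Fin.sum_univ_three, coe_basisOfLinearIndependentOfCardEqFinrank]
      simp only [Matrix.cons_val]
      abel
    rw [hvec, hnorm, (hform (y 1) (y 2)).2, ← sub_eq_zero]
    simp only [Fin.sum_univ_three, Matrix.of_apply, Matrix.cons_val]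
    ring_nf

end IsUnitalCodeword

end HermitianForm

section PlaneSectionOfQuasiHermitian
variable {F : Type*} [Field F] {E : Type*} [AddCommGroup E] [Module F E] {c : E → F}

theorem sum_kerIndicator_eq_zero [Finite F] [Fintype E] (hE : 1 < finrank F E) (φ : Dual F E) :
    ∑ x, kerIndicator φ x = 0 := by
  classical
  have := Fintype.ofFinite F
  have hker : finrank F (LinearMap.ker φ) ≠ 0 := by
    have hrank := LinearMap.finrank_range_add_finrank_ker φ
    have hrange := Submodule.finrank_le (LinearMap.range φ)
    rw [finrank_self] at hrange
    lia
  have hcard : ∑ x, kerIndicator φ x = (Fintype.card (LinearMap.ker φ) : F) := by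
    simp only [kerIndicator, Finset.sum_boole, Fintype.card_subtype, LinearMap.mem_ker]
  rw [hcard, Module.card_eq_pow_finrank (K := F), Nat.cast_pow, FiniteField.cast_card_eq_zero,
    zero_pow hker]

theorem sum_apply_eq_zero_of_mem_hyperplaneCode [Finite F] [Fintype E] (hE : 1 < finrank F E)
    (hc : c ∈ hyperplaneCode F E) : ∑ x, c x = 0 := by
  obtain ⟨s, a, ha⟩ := exists_eq_sum_kerIndicator hc
  simp only [ha]
  rw [Finset.sum_comm]
  exact Finset.sum_eq_zero fun φ _ => by
    rw [← Finset.mul_sum, sum_kerIndicator_eq_zero hE, mul_zero]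

theorem apply_zero_eq_pointCount_top [Finite F] [Finite E] (hE : 1 < finrank F E)
    (hc : c ∈ hyperplaneCode F E) (h01 : ∀ x ≠ 0, c x = 0 ∨ c x = 1) :
    c 0 = pointCount c (⊤ : Submodule F E) := by
  classical
  have := Fintype.ofFinite F
  have := Fintype.ofFinite E
  have hsupport : ∑ x ∈ Finset.univ.erase (0 : E), c x =
      ({x | x ∈ (⊤ : Submodule F E) ∧ x ≠ 0 ∧ c x ≠ 0}.ncard : F) := by
    rw [Set.ncard_eq_toFinset_card', Set.toFinset_ofPred, Finset.card_filter, Nat.cast_sum,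
      ← Finset.sum_erase Finset.univ (a := (0 : E)) (by simp)]
    refine Finset.sum_congr rfl fun x hx => ?_
    have hx0 := Finset.ne_of_mem_erase hx
    rcases h01 x hx0 with hcx | hcx <;> simp [hcx, hx0]
  have hsum := sum_apply_eq_zero_of_mem_hyperplaneCode hE hc
  rw [← Finset.add_sum_erase _ _ (Finset.mem_univ (0 : E)), hsupport,
    ncard_support_eq_mul_pointCount hc, Nat.card_eq_fintype_card, Nat.cast_mul,
    Nat.cast_pred Fintype.card_pos, FiniteField.cast_card_eq_zero] at hsum
  linear_combination hsum

theorem pointCount_comp_of_injective [Finite F] {E' : Type*} [AddCommGroup E'] [Module F E']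
    (hc : c ∈ hyperplaneCode F E) {f : E' →ₗ[F] E} (hf : Function.Injective f)
    (L : Submodule F E') : pointCount (c ∘ f) L = pointCount c (L.map f) := by
  have himage : f '' {x | x ∈ L ∧ x ≠ 0 ∧ (c ∘ f) x ≠ 0} =
      {x | x ∈ L.map f ∧ x ≠ 0 ∧ c x ≠ 0} := by
    ext x
    constructor
    · rintro ⟨y, ⟨hy, hy0, hcy⟩, rfl⟩
      exact ⟨Submodule.mem_map_of_mem hy, (map_ne_zero_iff f hf).2 hy0, hcy⟩
    · rintro ⟨⟨y, hy, rfl⟩, hy0, hcy⟩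
      exact ⟨y, ⟨hy, (map_ne_zero_iff f hf).1 hy0, hcy⟩, rfl⟩
  have hcard := hf.injOn.ncard_image (s := {x | x ∈ L ∧ x ≠ 0 ∧ (c ∘ f) x ≠ 0})
  rw [himage, ncard_support_eq_mul_pointCount hc,
    ncard_support_eq_mul_pointCount (comp_mem_hyperplaneCode hc f)] at hcard
  exact Nat.eq_of_mul_eq_mul_left (Nat.sub_pos_of_lt Finite.one_lt_card) hcard.symm

theorem IsQuasiHermitianCodeword.isPlaneSectionCodeword [Fintype F] [Finite E] {p q m : ℕ} {ε : ℤ}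
    (hc : IsQuasiHermitianCodeword q m ε c) [CharP F p] (hp : p.Prime) (hpq : p ∣ q) (hq : 4 < q)
    (hm : 1 ≤ m) (hF : Fintype.card F = q ^ 2) {π : Submodule F E} (hπ : finrank F π = 3)
    (hcount : pointCount c π = q ^ 3 + 1) : IsPlaneSectionCodeword q (c ∘ π.subtype) where
  toIsConeCodeword := hc.toIsConeCodeword.comp π.subtype
  finrank_eq := hπ
  pointCount_top := by
    rw [pointCount_comp_of_injective hc.mem π.injective_subtype, Submodule.map_subtype_top, hcount]
  pointCount_add_lt {L} hL hlt := by
    have hmem := comp_mem_hyperplaneCode hc.mem π.subtype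
    obtain ⟨u, v, huv, rfl, hu⟩ := exists_span_pair_eq_of_pointCount_lt hmem hL (hF.symm ▸ hlt)
    have hu0 : u ≠ 0 := huv.ne_zero 0
    have huv' : LinearIndependent F ![(u : E), (v : E)] := by
      rw [LinearIndependent.pair_iff] at huv ⊢
      exact fun a b hab => huv a b (Subtype.ext hab)
    rw [pointCount_span_pair hmem huv, pointCount_span_singleton_of_eq_zero hmem hu0 hu, zero_add]
    exact hc.affineCount_add_lt hp hpq hq hm hF huv' hu

end PlaneSectionOfQuasiHermitian

section ProjectiveSpace
variable {F : Type} [Field F] {n : ℕ}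

/-- The identification of Mathlib's projectivization with the points of `PG(n - 1, F)`. -/
noncomputable def projPointEquiv (F : Type) [Field F] (n : ℕ) : ℙ F (Fin n → F) ≃ ProjPoint F n :=
  Projectivization.equivSubmodule F (Fin n → F)

theorem projPointEquiv_mem_pointsIn {P : ℙ F (Fin n → F)} {L : Submodule F (Fin n → F)} :
    projPointEquiv F n P ∈ pointsIn F n L ↔ P.submodule ≤ L := Iff.rfl

theorem projPointEquiv_mk_mem_pointsIn {x : Fin n → F} (hx : x ≠ 0)
    {L : Submodule F (Fin n → F)} :
    projPointEquiv F n (.mk F x hx) ∈ pointsIn F n L ↔ x ∈ L := by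
  rw [projPointEquiv_mem_pointsIn, Projectivization.submodule_mk,
    Submodule.span_singleton_le_iff_mem]

theorem exists_projPointEquiv_mk_eq (P : ProjPoint F n) :
    ∃ (x : Fin n → F) (hx : x ≠ 0), projPointEquiv F n (.mk F x hx) = P :=
  ⟨((projPointEquiv F n).symm P).rep, Projectivization.rep_nonzero _, by simp⟩

theorem pointCount_eq_secant {V : Set (ProjPoint F n)} {c : (Fin n → F) → F}
    (hcV : ∀ x hx, c x ≠ 0 ↔ projPointEquiv F n (.mk F x hx) ∈ V) (L : Submodule F (Fin n → F)) :
    pointCount c L = secant F n V L := by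
  have hpreimage : {P : ℙ F (Fin n → F) | P.submodule ≤ L ∧ c P.rep ≠ 0} =
      projPointEquiv F n ⁻¹' (V ∩ pointsIn F n L) := by
    ext P
    rw [Set.mem_preimage, Set.mem_inter_iff, projPointEquiv_mem_pointsIn, Set.mem_ofPred_eq,
      hcV _ P.rep_nonzero, P.mk_rep, and_comm]
  rw [pointCount, hpreimage, secant, Set.ncard_preimage_of_injective_subset_range
    (projPointEquiv F n).injective (by simp)]

theorem exists_mem_hyperplaneCode_apply_eq {p : ℕ} [CharP F p] {v : ProjPoint F (n + 1) → ZMod p}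
    (hv : v ∈ hypCode F p (n + 1)) : ∃ c ∈ hyperplaneCode F (Fin (n + 1) → F),
      ∀ x hx, c x = ZMod.castHom (dvd_refl p) F (v (projPointEquiv F (n + 1) (.mk F x hx))) := by
  induction hv using Submodule.span_induction with
  | mem v hv =>
    obtain ⟨H, hH, rfl⟩ := hv
    obtain ⟨φ, -, rfl⟩ := exists_ker_eq (finrank_fin_fun F) hH
    refine ⟨kerIndicator φ, kerIndicator_mem_hyperplaneCode φ, fun x hx => ?_⟩
    have hmem := projPointEquiv_mk_mem_pointsIn hx (L := LinearMap.ker φ)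
    rw [LinearMap.mem_ker] at hmem
    by_cases hφx : φ x = 0
    · rw [kerIndicator_apply_of_eq_zero hφx, charVec, Set.indicator_of_mem (hmem.2 hφx),
        Pi.one_apply, map_one]
    · rw [kerIndicator_apply_of_ne_zero hφx, charVec, Set.indicator_of_notMem (mt hmem.1 hφx),
        map_zero]
  | zero => exact ⟨0, Submodule.zero_mem _, fun x hx => by simp⟩
  | add v v' _ _ ih ih' =>
    obtain ⟨c, hc, hcv⟩ := ih
    obtain ⟨c', hc', hcv'⟩ := ih'
    exact ⟨c + c', Submodule.add_mem _ hc hc', fun x hx => by simp [hcv x hx, hcv' x hx]⟩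
  | smul a v _ ih =>
    obtain ⟨c, hc, hcv⟩ := ih
    exact ⟨ZMod.castHom (dvd_refl p) F a • c, Submodule.smul_mem _ _ hc,
      fun x hx => by simp [hcv x hx]⟩

theorem exists_indicator_mem_hyperplaneCode {p : ℕ} [CharP F p] {V : Set (ProjPoint F (n + 1))}
    (hV : charVec F p (n + 1) V ∈ hypCode F p (n + 1)) : ∃ c ∈ hyperplaneCode F (Fin (n + 1) → F),
      (∀ x ≠ 0, c x = 0 ∨ c x = 1) ∧
        ∀ x hx, c x ≠ 0 ↔ projPointEquiv F (n + 1) (.mk F x hx) ∈ V := by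
  obtain ⟨c, hc, hcV⟩ := exists_mem_hyperplaneCode_apply_eq hV
  refine ⟨c, hc, fun x hx => ?_, fun x hx => ?_⟩ <;> rw [hcV x hx, charVec] <;>
    by_cases hmem : projPointEquiv F (n + 1) (.mk F x hx) ∈ V <;> simp [hmem]

theorem isClassicalUnital_of_basis {q : ℕ} {π : Submodule F (Fin n → F)} {V : Set (ProjPoint F n)}
    {c : (Fin n → F) → F} (hcV : ∀ x hx, c x ≠ 0 ↔ projPointEquiv F n (.mk F x hx) ∈ V)
    (B : Basis (Fin 3) F π) {A : Matrix (Fin 3) (Fin 3) F} (hdet : IsUnit A.det)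
    (hA : Aᵀ = A.map (fun a => a ^ q))
    (hform : ∀ y : Fin 3 → F, c (∑ i, y i • B i : π) ≠ 0 ↔
      ∑ i, ∑ j, y i * A i j * y j ^ q = 0) :
    IsClassicalUnital F q n π (V ∩ pointsIn F n π) := by
  let e : (Fin 3 → F) →ₗ[F] (Fin n → F) := π.subtype ∘ₗ B.equivFun.symm
  have hker : LinearMap.ker e = ⊥ := by
    rw [LinearMap.ker_comp, Submodule.ker_subtype, Submodule.comap_bot, LinearEquiv.ker]
  have hrange : LinearMap.range e = π := by
    rw [LinearMap.range_comp, LinearEquiv.range, Submodule.map_subtype_top]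
  have he (y : Fin 3 → F) : c (e y) ≠ 0 ↔ ∑ i, ∑ j, y i * A i j * y j ^ q = 0 := by
    rw [← hform y, ← B.equivFun_symm_apply]
    rfl
  refine ⟨e, hker, hrange, A, hdet, hA, Set.ext fun P => ⟨fun ⟨hPV, hPπ⟩ => ?_, ?_⟩⟩
  · obtain ⟨x, hx, rfl⟩ := exists_projPointEquiv_mk_eq P
    rw [projPointEquiv_mk_mem_pointsIn, ← hrange] at hPπ
    obtain ⟨y, rfl⟩ := hPπ
    exact ⟨y, ne_zero_of_map hx, Projectivization.submodule_mk _ hx, (he y).1 ((hcV _ hx).2 hPV)⟩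
  · rintro ⟨y, hy, hP, hzero⟩
    have hx : e y ≠ 0 := (map_ne_zero_iff e (LinearMap.ker_eq_bot.1 hker)).2 hy
    obtain rfl : projPointEquiv F n (.mk F (e y) hx) = P :=
      Subtype.ext ((Projectivization.submodule_mk _ hx).trans hP.symm)
    exact ⟨(hcV _ hx).1 ((he y).2 hzero),
      (projPointEquiv_mk_mem_pointsIn hx).2 (hrange ▸ LinearMap.mem_range_self e y)⟩

theorem IsQuasiHermitian.exists_isQuasiHermitianCodeword [Finite F] {p q m : ℕ} [CharP F p]
    (hpq : p ∣ q) {V : Set (ProjPoint F (m + 2 + 1))}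
    (hV : IsQuasiHermitian F q (m + 2) V)
    (hcode : charVec F p (m + 2 + 1) V ∈ hypCode F p (m + 2 + 1)) :
    ∃ c : (Fin (m + 2 + 1) → F) → F, IsQuasiHermitianCodeword q m ((-1) ^ m) c ∧
      ∀ x hx, c x ≠ 0 ↔ projPointEquiv F (m + 2 + 1) (.mk F x hx) ∈ V := by
  obtain ⟨c, hc, h01, hcV⟩ := exists_indicator_mem_hyperplaneCode hcode
  obtain ⟨hcard, hhyper⟩ := hV
  have hsign : (-1 : ℤ) ^ (m + 2) = (-1) ^ m := by rw [pow_add]; norm_num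
  have hsign' : (-1 : ℤ) ^ (m + 1) = -(-1) ^ m := by rw [pow_succ]; ring
  have hfin : finrank F (Fin (m + 2 + 1) → F) = m + 3 := finrank_fin_fun F
  have hVtop : secant F (m + 2 + 1) V ⊤ = V.ncard := by
    rw [secant, pointsIn]; simp
  have htop : ((q : ℤ) ^ 2 - 1) * pointCount c (⊤ : Submodule F (Fin (m + 2 + 1) → F)) =
      ((q : ℤ) ^ (m + 3) + (-1) ^ m) * ((q : ℤ) ^ (m + 2) - (-1) ^ m) := by
    rw [pointCount_eq_secant hcV, hVtop, mul_comm, hcard, hsign]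
  have hzero : c 0 = 1 := by
    have hqF : (q : F) = 0 := (CharP.cast_eq_zero_iff F p q).2 hpq
    have hcast := congrArg (Int.cast : ℤ → F) htop
    push_cast at hcast
    rw [← apply_zero_eq_pointCount_top (by lia) hc h01, hqF] at hcast
    have hsq : ((-1 : F) ^ m) * (-1) ^ m = 1 := by rw [← mul_pow]; simp
    simp only [ne_eq, OfNat.ofNat_ne_zero, not_false_eq_true, zero_pow, zero_sub, neg_mul, one_mul,
      Nat.add_eq_zero_iff, and_false, zero_add, mul_neg, neg_inj] at hcast
    rw [hcast, hsq]
  refine ⟨c, ⟨⟨hc, fun x => ?_, hzero⟩, hfin, neg_one_pow_eq_or ℤ m, htop, fun φ hφ => ?_⟩, hcV⟩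
  · exact (eq_or_ne x 0).elim (fun hx => .inr (hx ▸ hzero)) (h01 x)
  · have hφV := hhyper _ (finrank_ker_of_ne_zero hfin hφ)
    rw [hsign, show m + 2 - 1 = m + 1 by lia, show m + 2 - 2 = m by lia, hsign', mul_comm] at hφV
    rw [pointCount_eq_secant hcV]
    simpa only [sub_neg_eq_add, ← sub_eq_add_neg] using hφV

end ProjectiveSpace

/-- if a plane `π` contains exactly `q³ + 1` points of `V`, then
`π ∩ V` is a classical unital of `π`. -/
theorem stmt10 (p h q r : ℕ) (hp : p.Prime) (hh : 1 ≤ h) (hq : q = p ^ h) (hq4 : 4 < q)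
    (hr : 3 ≤ r)
    (F : Type) [Field F] [Fintype F] (hF : Fintype.card F = q ^ 2)
    (V : Set (ProjPoint F (r + 1))) (hV : IsQuasiHermitian F q r V)
    (hcode : charVec F p (r + 1) V ∈ hypCode F p (r + 1))
    (π : Submodule F (Fin (r + 1) → F)) (hπ : finrank F π = 3)
    (hsize : secant F (r + 1) V π = q ^ 3 + 1) :
    IsClassicalUnital F q (r + 1) π (V ∩ pointsIn F (r + 1) π) := by
  have := Fact.mk hp
  obtain ⟨m, rfl⟩ : ∃ m, r = m + 2 := ⟨r - 2, by lia⟩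
  have hpq : p ∣ q := hq ▸ dvd_pow_self p (by lia)
  have : CharP F p := charP_of_card_eq_prime_pow (f := h * 2) (by rw [hF, hq, pow_mul])
  obtain ⟨c, hc, hcV⟩ := hV.exists_isQuasiHermitianCodeword hpq hcode
  have hplane : IsPlaneSectionCodeword q (c ∘ π.subtype) :=
    hc.isPlaneSectionCodeword hp hpq hq4 (by lia) hF hπ ((pointCount_eq_secant hcV π).trans hsize)
  obtain ⟨B, A, hdet, hA, hform⟩ :=
    (hplane.isUnitalCodeword hp hpq hq4 hF).exists_hermitian_matrix hp hq (by lia) hF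
  exact isClassicalUnital_of_basis hcV B hdet hA hform
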